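/- arXiv:math/0008224 — 7 statements merged into one kernel-verified Lean document; each statement's English description precedes it below -/
import Mathlib

section
/- The triple (R_{k×k}, ∂, products) defined from the k×k matrix algebra is a conformal algebra: the explicitly defined ∂ and n-th products on A ⊗ F[t₁,t₂] satisfy locality, sesquilinearity, skew-symmetry, and the Jacobi identity. -/
/-- The carrier of `R_{k×k} = M_k(F) ⊗ F[t₁,t₂]`: the element `u(m,n) = u ⊗ t₁^m t₂^n`
is encoded as `Finsupp.single (m, n) u`. -/
abbrev MatCarrier (F : Type*) [Field F] (k : ℕ) :=
  (ℕ × ℕ) →₀ Matrix (Fin k) (Fin k) F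

/-- The operator `∂` on `R_{k×k}`:
`∂(u(m,n)) = (m+1)·u(m+1,n) + (n+1)·u(m,n+1)`. -/
noncomputable def mD (F : Type*) [Field F] (k : ℕ) :
    MatCarrier F k → MatCarrier F k :=
  fun f => f.sum fun p u =>
    (((p.1 + 1 : ℕ) : F)) • Finsupp.single (p.1 + 1, p.2) u +
    (((p.2 + 1 : ℕ) : F)) • Finsupp.single (p.1, p.2 + 1) u

/-- The `s`-th product on `R_{k×k}`: the coefficient of `z^{-s-1}` in
`Y⁺(u(m₁,m₂),z)(v(n₁,n₂)) =
  binom(-n₁-1,m₂)·Σ_p binom(p,m₁)·(uv)(p,n₂)·z^{p-m₁-m₂-n₁-1}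
  - binom(-n₂-1,m₁)·Σ_q binom(q,m₂)·(vu)(n₁,q)·z^{q-m₁-m₂-n₂-1}`,
extended bilinearly, where `binom(-a-1,b) = (-1)^b·binom(a+b,b)`. -/
noncomputable def mProd (F : Type*) [Field F] (k : ℕ) (s : ℕ)
    (f g : MatCarrier F k) : MatCarrier F k :=
  f.sum fun p u => g.sum fun q v =>
    (if s ≤ p.1 + p.2 + q.1 then
      ((-1 : F) ^ p.2 * ((q.1 + p.2).choose p.2 : F) *
        ((p.1 + p.2 + q.1 - s).choose p.1 : F)) •
        Finsupp.single (p.1 + p.2 + q.1 - s, q.2) (u * v)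
     else 0) -
    (if s ≤ p.1 + p.2 + q.2 then
      ((-1 : F) ^ p.1 * ((q.2 + p.1).choose p.1 : F) *
        ((p.1 + p.2 + q.2 - s).choose p.2 : F)) •
        Finsupp.single (q.1, p.1 + p.2 + q.2 - s) (v * u)
     else 0)

/-- The weight space `R_{k×k}^{(n)} = span{u(m₁,m₂) : m₁ + m₂ + 1 = n}`. -/
noncomputable def mWeight (F : Type*) [Field F] (k : ℕ) (n : ℕ) :
    Submodule F (MatCarrier F k) :=
  Submodule.span F {x | ∃ (u : Matrix (Fin k) (Fin k) F) (m₁ m₂ : ℕ),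
    m₁ + m₂ + 1 = n ∧ x = Finsupp.single (m₁, m₂) u}


namespace MKK
open Finset Filter

variable {F : Type*} [Field F]

lemma coeff_unique [CharZero F] {V : Type*} [AddCommGroup V] [Module F V] (N : ℕ) (c : ℕ → V)
    (h : ∀ x : F, ∑ i ∈ range N, x ^ i • c i = 0) : ∀ i < N, c i = 0 := by
  intro i hi
  rw [← Module.forall_dual_apply_eq_zero_iff F]
  intro φ
  have hp : (∑ i ∈ range N, Polynomial.C (φ (c i)) * Polynomial.X ^ i) = (0 : Polynomial F) := by
    apply Polynomial.funext
    intro x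
    have := congrArg φ (h x)
    simp only [map_sum, map_smul, map_zero, smul_eq_mul] at this
    simp only [Polynomial.eval_finsetSum, Polynomial.eval_mul, Polynomial.eval_C,
      Polynomial.eval_pow, Polynomial.eval_X, Polynomial.eval_zero]
    rw [← this]
    exact Finset.sum_congr rfl fun _ _ => mul_comm _ _
  have := congrArg (fun p => Polynomial.coeff p i) hp
  simpa [Polynomial.finsetSum_coeff, Polynomial.coeff_C_mul, Polynomial.coeff_X_pow, hi] using this

/-- exponential version -/
lemma coeff_unique' [CharZero F] {V : Type*} [AddCommGroup V] [Module F V] (N : ℕ) (c d : ℕ → V)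
    (h : ∀ x : F, ∑ i ∈ range N, (x ^ i / (i.factorial : F)) • c i
      = ∑ i ∈ range N, (x ^ i / (i.factorial : F)) • d i) : ∀ i < N, c i = d i := by
  intro i hi
  have := coeff_unique (F := F) N (fun i => ((i.factorial : F)⁻¹) • (c i - d i)) (by
    intro x
    have := sub_eq_zero.2 (h x)
    rw [← Finset.sum_sub_distrib] at this
    rw [← this]
    refine Finset.sum_congr rfl fun j _ => ?_
    rw [smul_smul, ← smul_sub, div_eq_mul_inv]) i hi
  have h0 : ((i.factorial : F)⁻¹) ≠ 0 := inv_ne_zero (by exact_mod_cast i.factorial_ne_zero)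
  exact sub_eq_zero.1 ((smul_eq_zero.1 this).resolve_left h0)

lemma exp_add [CharZero F] (x y : F) (r : ℕ) :
    (x + y) ^ r / (r.factorial : F) = ∑ i ∈ range (r + 1),
      (x ^ i / (i.factorial : F)) * (y ^ (r - i) / ((r - i).factorial : F)) := by
  rw [add_pow, Finset.sum_div]
  refine Finset.sum_congr rfl fun i hi => ?_
  have hi' : i ≤ r := by simpa [Nat.lt_succ_iff] using hi
  have h1 : (i.factorial : F) ≠ 0 := by exact_mod_cast i.factorial_ne_zero
  have h2 : ((r - i).factorial : F) ≠ 0 := by exact_mod_cast (r - i).factorial_ne_zero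
  have h3 : (r.factorial : F) ≠ 0 := by exact_mod_cast r.factorial_ne_zero
  rw [Nat.cast_choose F hi']
  field_simp

lemma diag {V : Type*} [AddCommMonoid V] (M : ℕ) (d : ℕ → ℕ → V)
    (h : ∀ i j, M ≤ i + j → d i j = 0) :
    ∑ r ∈ range M, ∑ i ∈ range (r + 1), d i (r - i) = ∑ i ∈ range M, ∑ j ∈ range M, d i j := by
  rw [Finset.sum_range_diag_flip]
  refine Finset.sum_congr rfl fun i _ => ?_
  refine Finset.sum_subset (by intro x; simp; omega) fun j _ hj => h i j ?_
  simp at hj; omega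

/-- expansion of `(x+y)^r/r!` in a sum -/
lemma exp_sum [CharZero F] {V : Type*} [AddCommGroup V] [Module F V] (M : ℕ) (c : ℕ → V)
    (hc : ∀ r, M ≤ r → c r = 0) (x y : F) :
    ∑ r ∈ range M, ((x + y) ^ r / (r.factorial : F)) • c r =
      ∑ i ∈ range M, ∑ n ∈ range M,
        ((x ^ i / (i.factorial : F)) * (y ^ n / (n.factorial : F))) • c (i + n) := by
  rw [← diag M (fun i n => ((x ^ i / (i.factorial : F)) * (y ^ n / (n.factorial : F))) • c (i + n))
    (fun i j h => by simp [hc _ h])]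
  refine Finset.sum_congr rfl fun r _ => ?_
  rw [exp_add, Finset.sum_smul]
  refine Finset.sum_congr rfl fun i hi => ?_
  have hi' : i ≤ r := by simpa [Nat.lt_succ_iff] using hi
  simp only [Nat.add_sub_cancel' hi']

variable {k : ℕ}

/-- evaluation of the polynomial -/
noncomputable def ev (a b : F) : MatCarrier F k →ₗ[F] Matrix (Fin k) (Fin k) F :=
  Finsupp.lsum F fun p => ((a ^ p.1 / (p.1.factorial : F)) * (b ^ p.2 / (p.2.factorial : F))) •
    LinearMap.id

lemma ev_single (a b : F) (p : ℕ × ℕ) (u : Matrix (Fin k) (Fin k) F) :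
    ev a b (Finsupp.single p u) =
      ((a ^ p.1 / (p.1.factorial : F)) * (b ^ p.2 / (p.2.factorial : F))) • u := by
  simp [ev]

lemma ev_inj [CharZero F] {f g : MatCarrier F k} (h : ∀ a b : F, ev a b f = ev a b g) : f = g := by
  obtain ⟨N, hN⟩ : ∃ N, ∀ p ∈ (f - g).support, p.1 < N ∧ p.2 < N := by
    refine ⟨(f - g).support.sup (fun p => p.1 + p.2) + 1, fun p hp => ?_⟩
    have := Finset.le_sup (f := fun p : ℕ × ℕ => p.1 + p.2) hp
    omega
  have key : ∀ a b : F, ev a b (f - g) = ∑ i ∈ range N, (a ^ i / (i.factorial : F)) •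
      ∑ j ∈ range N, (b ^ j / (j.factorial : F)) • (f - g) (i, j) := by
    intro a b
    simp only [Finset.smul_sum, smul_smul]
    rw [← Finset.sum_product']
    rw [ev, Finsupp.lsum_apply, Finsupp.sum]
    refine Finset.sum_subset ?_ ?_
    · intro p hp
      simp only [Finset.mem_product, Finset.mem_range]
      exact hN p hp
    · intro p _ hp
      rw [Finsupp.notMem_support_iff] at hp
      simp [hp]
  rw [← sub_eq_zero]
  ext1 p
  by_cases hp : p ∈ (f - g).support
  · have h1 := coeff_unique' (F := F) N (fun i => fun b : F => ∑ j ∈ range N, (b ^ j / (j.factorial : F)) • (f - g) (i, j))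
      0 (by
        intro a
        ext1 b
        have := key a b
        rw [map_sub, h, sub_self] at this
        simp only [Finset.sum_apply, Pi.smul_apply, Pi.zero_apply, smul_zero, Finset.sum_const_zero]
        exact this.symm) p.1 (hN p hp).1
    have h2 := coeff_unique' (F := F) N (fun j => (f - g) (p.1, j)) 0 (by
        intro b
        have := congrFun h1 b
        simpa using this) p.2 (hN p hp).2
    simpa using h2
  · rw [Finsupp.notMem_support_iff] at hp
    simpa using hp

lemma ev_D [CharZero F] (a b : F) (f : MatCarrier F k) :
    ev a b (mD F k f) = (a + b) • ev a b f := by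
  rw [mD, map_finsuppSum, ev, Finsupp.lsum_apply, Finsupp.sum, Finsupp.sum, Finset.smul_sum]
  refine Finset.sum_congr rfl fun p _ => ?_
  rw [map_add, map_smul, map_smul, ← ev, ev_single, ev_single]
  simp only [LinearMap.smul_apply, LinearMap.id_apply, smul_smul, ← add_smul]
  congr 1
  have h1 : (p.1.factorial : F) ≠ 0 := by exact_mod_cast p.1.factorial_ne_zero
  have h2 : (p.2.factorial : F) ≠ 0 := by exact_mod_cast p.2.factorial_ne_zero
  have h3 : ((p.1 : F) + 1) ≠ 0 := by exact_mod_cast p.1.succ_ne_zero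
  have h4 : ((p.2 : F) + 1) ≠ 0 := by exact_mod_cast p.2.succ_ne_zero
  simp only [Nat.factorial_succ, Nat.cast_mul, Nat.cast_add, Nat.cast_one]
  field_simp
  ring

lemma ev_D_iter [CharZero F] (a b : F) (j : ℕ) (f : MatCarrier F k) :
    ev a b ((mD F k)^[j] f) = (a + b) ^ j • ev a b f := by
  induction j with
  | zero => simp
  | succ j ih => rw [Function.iterate_succ_apply', ev_D, ih, smul_smul, pow_succ']

lemma prod_single (s : ℕ) (p q : ℕ × ℕ) (u v : Matrix (Fin k) (Fin k) F) :
    mProd F k s (Finsupp.single p u) (Finsupp.single q v) =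
    (if s ≤ p.1 + p.2 + q.1 then
      ((-1 : F) ^ p.2 * ((q.1 + p.2).choose p.2 : F) *
        ((p.1 + p.2 + q.1 - s).choose p.1 : F)) •
        Finsupp.single (p.1 + p.2 + q.1 - s, q.2) (u * v)
     else 0) -
    (if s ≤ p.1 + p.2 + q.2 then
      ((-1 : F) ^ p.1 * ((q.2 + p.1).choose p.1 : F) *
        ((p.1 + p.2 + q.2 - s).choose p.2 : F)) •
        Finsupp.single (q.1, p.1 + p.2 + q.2 - s) (v * u)
     else 0) := by
  rw [mProd, Finsupp.sum_single_index, Finsupp.sum_single_index]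
  · simp
  · simp

lemma prod_add_left (s : ℕ) (f f' g : MatCarrier F k) :
    mProd F k s (f + f') g = mProd F k s f g + mProd F k s f' g := by
  rw [mProd, Finsupp.sum_add_index']
  · rfl
  · intro p; simp
  · intro p u v
    rw [← Finsupp.sum_add]
    refine Finsupp.sum_congr fun q _ => ?_
    simp only [add_mul, mul_add, Finsupp.single_add, smul_add]
    split_ifs <;> abel

lemma prod_add_right (s : ℕ) (f g g' : MatCarrier F k) :
    mProd F k s f (g + g') = mProd F k s f g + mProd F k s f g' := by
  simp only [mProd]
  rw [← Finsupp.sum_add]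
  refine Finsupp.sum_congr fun p _ => ?_
  rw [Finsupp.sum_add_index']
  · intro p; simp
  · intro p u v
    simp only [add_mul, mul_add, Finsupp.single_add, smul_add]
    split_ifs <;> abel

lemma prod_zero_left (s : ℕ) (g : MatCarrier F k) : mProd F k s 0 g = 0 := by simp [mProd]
lemma prod_zero_right (s : ℕ) (g : MatCarrier F k) : mProd F k s g 0 = 0 := by simp [mProd]

/-- the main property: locality bound and the lambda-bracket formula. -/
def K (N : ℕ) (f g : MatCarrier F k) : Prop :=
  (∀ s, N ≤ s → mProd F k s f g = 0) ∧
  ∀ l a b : F, ∑ s ∈ range N, (l ^ s / (s.factorial : F)) • ev a b (mProd F k s f g) =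
    ev a (-a - l) f * ev (a + l) b g - ev a (b + l) g * ev (-b - l) b f

lemma K_zero_left (N : ℕ) (g : MatCarrier F k) : K N 0 g := by
  constructor <;> simp [prod_zero_left]
lemma K_zero_right (N : ℕ) (g : MatCarrier F k) : K N g 0 := by
  constructor <;> simp [prod_zero_right]

lemma K_add_left {N : ℕ} {f f' g : MatCarrier F k} (h : K N f g) (h' : K N f' g) :
    K N (f + f') g := by
  refine ⟨fun s hs => by rw [prod_add_left, h.1 s hs, h'.1 s hs, add_zero], fun l a b => ?_⟩
  simp only [prod_add_left, map_add, smul_add, Finset.sum_add_distrib, h.2, h'.2, add_mul, mul_add]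
  abel

lemma K_add_right {N : ℕ} {f g g' : MatCarrier F k} (h : K N f g) (h' : K N f g') :
    K N f (g + g') := by
  refine ⟨fun s hs => by rw [prod_add_right, h.1 s hs, h'.1 s hs, add_zero], fun l a b => ?_⟩
  simp only [prod_add_right, map_add, smul_add, Finset.sum_add_distrib, h.2, h'.2, add_mul, mul_add]
  abel

/-- scalar identity for single terms -/
lemma scalar_id [CharZero F] (N m1 m2 n1 : ℕ) (hN : m1 + m2 + n1 < N) (l a : F) :
    ∑ s ∈ range N, (l ^ s / (s.factorial : F)) * (if s ≤ m1 + m2 + n1 then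
      ((-1 : F) ^ m2 * ((n1 + m2).choose m2 : F) * ((m1 + m2 + n1 - s).choose m1 : F)) *
        (a ^ (m1 + m2 + n1 - s) / ((m1 + m2 + n1 - s).factorial : F)) else 0) =
    (a ^ m1 / (m1.factorial : F)) * ((-a - l) ^ m2 / (m2.factorial : F)) *
      ((a + l) ^ n1 / (n1.factorial : F)) := by
  have h1 : (m1.factorial : F) ≠ 0 := by exact_mod_cast m1.factorial_ne_zero
  have h2 : (m2.factorial : F) ≠ 0 := by exact_mod_cast m2.factorial_ne_zero
  have h3 : (n1.factorial : F) ≠ 0 := by exact_mod_cast n1.factorial_ne_zero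
  have h4 : ((n1 + m2).factorial : F) ≠ 0 := by exact_mod_cast (n1 + m2).factorial_ne_zero
  have e : (a ^ m1 / (m1.factorial : F)) * ((-a - l) ^ m2 / (m2.factorial : F)) *
      ((a + l) ^ n1 / (n1.factorial : F)) =
      (-1) ^ m2 * ((n1 + m2).choose m2 : F) * (a ^ m1 / (m1.factorial : F)) *
        ((l + a) ^ (n1 + m2) / ((n1 + m2).factorial : F)) := by
    rw [Nat.cast_choose F (Nat.le_add_left m2 n1), Nat.add_sub_cancel,
      show -a - l = (-1) * (l + a) by ring, mul_pow, add_comm a l, pow_add]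
    field_simp
  rw [e, exp_add, Finset.mul_sum]
  symm
  apply Finset.sum_subset_zero_on_sdiff
  · intro x; simp; omega
  · intro s hs
    simp only [Finset.mem_sdiff, Finset.mem_range] at hs
    split_ifs with h
    · rw [Nat.choose_eq_zero_of_lt (by omega : m1 + m2 + n1 - s < m1)]
      simp
    · simp
  · intro s hs
    simp only [Finset.mem_range] at hs
    rw [if_pos (by omega)]
    obtain ⟨t, ht⟩ : ∃ t, n1 + m2 = s + t := ⟨n1 + m2 - s, by omega⟩
    have e1 : m1 + m2 + n1 - s = m1 + t := by omega
    have e2 : n1 + m2 - s = t := by omega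
    rw [e1, e2, Nat.cast_choose F (Nat.le_add_right m1 t), Nat.add_sub_cancel_left, pow_add]
    have h5 : ((m1 + t).factorial : F) ≠ 0 := by exact_mod_cast (m1 + t).factorial_ne_zero
    have h6 : (t.factorial : F) ≠ 0 := by exact_mod_cast t.factorial_ne_zero
    have h7 : (s.factorial : F) ≠ 0 := by exact_mod_cast s.factorial_ne_zero
    field_simp

lemma K_single [CharZero F] (p q : ℕ × ℕ) (u v : Matrix (Fin k) (Fin k) F) (N : ℕ)
    (hN : p.1 + p.2 + q.1 + q.2 < N) : K N (Finsupp.single p u) (Finsupp.single q v) := by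
  refine ⟨fun s hs => ?_, fun l a b => ?_⟩
  · rw [prod_single, if_neg (by omega), if_neg (by omega), sub_zero]
  · have i1 := scalar_id N p.1 p.2 q.1 (by omega) l a
    have i2 := scalar_id N p.2 p.1 q.2 (by omega) l b
    have e : ∀ s, (l ^ s / (s.factorial : F)) • ev a b (mProd F k s (Finsupp.single p u) (Finsupp.single q v))
      = ((l ^ s / (s.factorial : F)) * (if s ≤ p.1 + p.2 + q.1 then
      ((-1 : F) ^ p.2 * ((q.1 + p.2).choose p.2 : F) * ((p.1 + p.2 + q.1 - s).choose p.1 : F)) *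
        (a ^ (p.1 + p.2 + q.1 - s) / ((p.1 + p.2 + q.1 - s).factorial : F)) else 0)) •
          ((b ^ q.2 / (q.2.factorial : F)) • (u * v)) -
        ((l ^ s / (s.factorial : F)) * (if s ≤ p.2 + p.1 + q.2 then
      ((-1 : F) ^ p.1 * ((q.2 + p.1).choose p.1 : F) * ((p.2 + p.1 + q.2 - s).choose p.2 : F)) *
        (b ^ (p.2 + p.1 + q.2 - s) / ((p.2 + p.1 + q.2 - s).factorial : F)) else 0)) •
          ((a ^ q.1 / (q.1.factorial : F)) • (v * u)) := by
      intro s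
      rw [prod_single, map_sub, smul_sub, add_comm p.2 p.1]
      congr 1
      · split_ifs
        · rw [map_smul, ev_single]
          simp only [smul_smul]
          congr 1
          ring
        · simp
      · split_ifs
        · rw [map_smul, ev_single]
          simp only [smul_smul]
          congr 1
          ring
        · simp
    simp only [e, Finset.sum_sub_distrib, ← Finset.sum_smul]
    rw [i1, i2]
    simp only [ev_single, smul_smul, smul_mul_smul_comm]
    congr 2 <;> ring

lemma K_ex [CharZero F] (f g : MatCarrier F k) : ∀ᶠ N in atTop, K N f g := by
  induction f using Finsupp.induction_linear with
  | zero => exact Eventually.of_forall fun N => K_zero_left N g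
  | add f f' h h' => filter_upwards [h, h'] with N h h' using K_add_left h h'
  | single p u =>
    induction g using Finsupp.induction_linear with
    | zero => exact Eventually.of_forall fun N => K_zero_right N _
    | add f f' h h' => filter_upwards [h, h'] with N h h' using K_add_right h h'
    | single q v =>
      filter_upwards [eventually_gt_atTop (p.1 + p.2 + q.1 + q.2)] with N hN
      exact K_single p q u v N hN

lemma ev_all (P : ℕ → ℕ → Prop) (N₀ : ℕ) (h : ∀ n, ∀ᶠ N in atTop, P N n)
    (h0 : ∀ N n, N₀ ≤ n → P N n) : ∀ᶠ N in atTop, ∀ n, P N n := by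
  have : ∀ᶠ N in atTop, ∀ n ∈ range N₀, P N n := by
    rw [Filter.eventually_all_finset]
    exact fun n _ => h n
  filter_upwards [this] with N hN n
  by_cases hn : n < N₀
  · exact hN n (by simpa using hn)
  · exact h0 N n (by omega)

lemma K_ex_right [CharZero F] (f g h : MatCarrier F k) :
    ∀ᶠ N in atTop, ∀ n, K N f (mProd F k n g h) := by
  obtain ⟨N₀, h0⟩ := (K_ex g h).exists
  exact ev_all _ N₀ (fun n => K_ex _ _) fun N n hn => by rw [h0.1 n hn]; exact K_zero_right _ _

lemma K_ex_left [CharZero F] (f g h : MatCarrier F k) :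
    ∀ᶠ N in atTop, ∀ n, K N (mProd F k n f g) h := by
  obtain ⟨N₀, h0⟩ := (K_ex f g).exists
  exact ev_all _ N₀ (fun n => K_ex _ _) fun N n hn => by rw [h0.1 n hn]; exact K_zero_left _ _

lemma sesqui [CharZero F] (f g : MatCarrier F k) (a b : F) :
    ev a b (mProd F k 0 (mD F k f) g) = 0 ∧ ∀ n, ev a b (mProd F k (n + 1) (mD F k f) g) =
      -(((n + 1 : ℕ) : F)) • ev a b (mProd F k n f g) := by
  have H : ∀ i, ev a b (mProd F k i (mD F k f) g) =
      (-(i : F)) • ev a b (mProd F k (i - 1) f g) := by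
    intro i
    obtain ⟨N, hN⟩ := eventually_atTop.1 ((K_ex f g).and (K_ex (mD F k f) g))
    refine coeff_unique' (F := F) (N + i + 1) (fun i => ev a b (mProd F k i (mD F k f) g))
      (fun i => (-(i : F)) • ev a b (mProd F k (i - 1) f g)) ?_ i (by omega)
    intro l
    rw [(hN (N + i + 1) (by omega)).2.2, Finset.sum_range_succ']
    have e : ∀ s : ℕ, (l ^ (s + 1) / ((s + 1).factorial : F)) •
        (-((s + 1 : ℕ) : F)) • ev a b (mProd F k (s + 1 - 1) f g) =
        (-l) • (l ^ s / (s.factorial : F)) • ev a b (mProd F k s f g) := by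
      intro s
      rw [smul_smul, smul_smul, Nat.add_sub_cancel]
      congr 1
      have h1 : (s.factorial : F) ≠ 0 := by exact_mod_cast s.factorial_ne_zero
      have h3 : ((s : F) + 1) ≠ 0 := by exact_mod_cast s.succ_ne_zero
      simp only [Nat.factorial_succ, Nat.cast_mul, Nat.cast_add, Nat.cast_one]
      field_simp
      ring
    simp only [e, ← Finset.smul_sum, (hN (N + i) (by omega)).1.2, ev_D]
    simp only [smul_sub, smul_mul_assoc, mul_smul_comm]
    rw [show a + (-a - l) = -l by ring, show -b - l + b = -l by ring]
    simp
  refine ⟨by simpa using H 0, fun n => by simpa using H (n + 1)⟩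

lemma skew [CharZero F] (f g : MatCarrier F k) (n N : ℕ)
    (h : ∀ j ≥ N, mProd F k (n + j) g f = 0) (a b : F) :
    ev a b (mProd F k n f g) = ∑ j ∈ range N,
      ((-1 : F) ^ (n + j + 1) * ((j.factorial : F)⁻¹)) •
        ((a + b) ^ j • ev a b (mProd F k (n + j) g f)) := by
  obtain ⟨N₁, hN⟩ := eventually_atTop.1 ((K_ex f g).and (K_ex g f))
  set M := N₁ + N + n + 1 with hM
  have hK := hN M (by omega)
  have ext : ∑ j ∈ range N, ((-1 : F) ^ (n + j + 1) * ((j.factorial : F)⁻¹)) •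
        ((a + b) ^ j • ev a b (mProd F k (n + j) g f)) =
      ∑ j ∈ range M, ((-1 : F) ^ (n + j + 1) * ((j.factorial : F)⁻¹)) •
        ((a + b) ^ j • ev a b (mProd F k (n + j) g f)) := by
    refine Finset.sum_subset (by intro x; simp; omega) fun j _ hj => ?_
    rw [h j (by simpa using hj)]
    simp
  rw [ext]
  refine coeff_unique' (F := F) M (fun n => ev a b (mProd F k n f g)) (fun n => ∑ j ∈ range M,
      ((-1 : F) ^ (n + j + 1) * ((j.factorial : F)⁻¹)) •
        ((a + b) ^ j • ev a b (mProd F k (n + j) g f))) ?_ n (by omega)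
  intro l
  rw [hK.1.2]
  have h2 := hK.2.2 (-l + -(a + b)) a b
  rw [exp_sum M _ (fun r hr => by rw [hK.2.1 r hr, map_zero])] at h2
  have e : ∑ n ∈ range M, (l ^ n / (n.factorial : F)) • ∑ j ∈ range M,
      ((-1 : F) ^ (n + j + 1) * ((j.factorial : F)⁻¹)) •
        ((a + b) ^ j • ev a b (mProd F k (n + j) g f)) =
      -∑ i ∈ range M, ∑ n ∈ range M, (((-l) ^ i / (i.factorial : F)) *
        ((-(a + b)) ^ n / (n.factorial : F))) • ev a b (mProd F k (i + n) g f) := by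
    simp only [Finset.smul_sum, ← Finset.sum_neg_distrib, smul_smul, ← neg_smul]
    refine Finset.sum_congr rfl fun i _ => Finset.sum_congr rfl fun j _ => ?_
    congr 1
    rw [neg_pow l, neg_pow (a + b)]
    ring
  rw [e, h2]
  rw [show -a - (-l + -(a + b)) = b + l by ring, show a + (-l + -(a + b)) = -b - l by ring,
    show b + (-l + -(a + b)) = -a - l by ring, show -b - (-l + -(a + b)) = a + l by ring]
  abel

lemma nested {f g h : MatCarrier F k} {M : ℕ} (Kgh : K M g h)
    (Kr : ∀ n, K M f (mProd F k n g h)) (a b l x : F) :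
    ∑ n ∈ range M, (x ^ n / (n.factorial : F)) •
        ∑ m ∈ range M, (l ^ m / (m.factorial : F)) • ev a b (mProd F k m f (mProd F k n g h)) =
        ev a (-a - l) f * (ev (a + l) (-(a + l) - x) g * ev (a + l + x) b h
            - ev (a + l) (b + x) h * ev (-b - x) b g)
          - (ev a (-a - x) g * ev (a + x) (b + l) h - ev a (b + l + x) h * ev (-(b + l) - x) (b + l) g)
            * ev (-b - l) b f := by
  rw [← Kgh.2, ← Kgh.2, Finset.mul_sum, Finset.sum_mul, ← Finset.sum_sub_distrib]
  refine Finset.sum_congr rfl fun n _ => ?_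
  rw [(Kr n).2, smul_sub, mul_smul_comm, smul_mul_assoc]

lemma jacobi [CharZero F] (f g h : MatCarrier F k) (m n : ℕ) (a b : F) :
    ev a b (mProd F k m f (mProd F k n g h)) - ev a b (mProd F k n g (mProd F k m f h)) =
        ∑ j ∈ range (m + 1),
          ((m.choose j : F)) • ev a b (mProd F k (m + n - j) (mProd F k j f g) h) := by
  obtain ⟨N, hN⟩ := eventually_atTop.1 ((K_ex g h).and ((K_ex f h).and ((K_ex f g).and
    ((K_ex_right f g h).and ((K_ex_right g f h).and (K_ex_left f g h))))))
  obtain ⟨M, hM1, hm, hn⟩ : ∃ M, N + N ≤ M ∧ m < M ∧ n < M := ⟨N + N + m + n + 1, by omega⟩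
  obtain ⟨-, -, cfg, -, -, cl⟩ := hN N le_rfl
  obtain ⟨Kgh, Kfh, Kfg, Kr, Kr', Kl⟩ := hN M (by omega)
  have hc : ∀ j r, (N ≤ j ∨ N ≤ r) → ev a b (mProd F k r (mProd F k j f g) h) = 0 := by
    rintro j r (hj | hr)
    · rw [cfg.1 j hj, prod_zero_left, map_zero]
    · rw [(cl j).1 r hr, map_zero]
  -- generating function identity
  have G : ∀ l x : F, ∑ m ∈ range M, (l ^ m / (m.factorial : F)) •
      ∑ n ∈ range M, (x ^ n / (n.factorial : F)) •
        (ev a b (mProd F k m f (mProd F k n g h)) - ev a b (mProd F k n g (mProd F k m f h))) =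
      ∑ m ∈ range M, (l ^ m / (m.factorial : F)) • ∑ n ∈ range M, (x ^ n / (n.factorial : F)) •
        ∑ j ∈ range (m + 1),
          ((m.choose j : F)) • ev a b (mProd F k (m + n - j) (mProd F k j f g) h) := by
    intro l x
    have L1 : ∑ m ∈ range M, (l ^ m / (m.factorial : F)) •
        ∑ n ∈ range M, (x ^ n / (n.factorial : F)) • ev a b (mProd F k m f (mProd F k n g h)) =
        ev a (-a - l) f * (ev (a + l) (-(a + l) - x) g * ev (a + l + x) b h
            - ev (a + l) (b + x) h * ev (-b - x) b g)
          - (ev a (-a - x) g * ev (a + x) (b + l) h - ev a (b + l + x) h * ev (-(b + l) - x) (b + l) g)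
            * ev (-b - l) b f := by
      rw [← nested Kgh Kr]
      simp only [Finset.smul_sum]
      rw [Finset.sum_comm]
      simp only [smul_comm (l ^ _ / _) (x ^ _ / _)]
    have L2 : ∑ m ∈ range M, (l ^ m / (m.factorial : F)) •
        ∑ n ∈ range M, (x ^ n / (n.factorial : F)) • ev a b (mProd F k n g (mProd F k m f h)) =
        ev a (-a - x) g * (ev (a + x) (-(a + x) - l) f * ev (a + x + l) b h
            - ev (a + x) (b + l) h * ev (-b - l) b f)
          - (ev a (-a - l) f * ev (a + l) (b + x) h - ev a (b + x + l) h * ev (-(b + x) - l) (b + x) f)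
            * ev (-b - x) b g := by
      rw [← nested Kfh Kr']
    have R : ∑ m ∈ range M, (l ^ m / (m.factorial : F)) •
        ∑ n ∈ range M, (x ^ n / (n.factorial : F)) • ∑ j ∈ range (m + 1),
          ((m.choose j : F)) • ev a b (mProd F k (m + n - j) (mProd F k j f g) h) =
        ∑ j ∈ range M, (l ^ j / (j.factorial : F)) • ∑ r ∈ range M,
          ((l + x) ^ r / (r.factorial : F)) • ev a b (mProd F k r (mProd F k j f g) h) := by
      have e1 : ∀ j, ∑ r ∈ range M,
          ((l + x) ^ r / (r.factorial : F)) • ev a b (mProd F k r (mProd F k j f g) h) =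
          ∑ i ∈ range M, ∑ n ∈ range M, ((l ^ i / (i.factorial : F)) * (x ^ n / (n.factorial : F)))
            • ev a b (mProd F k (i + n) (mProd F k j f g) h) := fun j =>
        exp_sum M _ (fun r hr => hc j r (Or.inr (by omega))) l x
      simp only [e1, Finset.smul_sum]
      rw [← diag M (fun j i => ∑ n ∈ range M, (l ^ j / (j.factorial : F)) •
        ((l ^ i / (i.factorial : F)) * (x ^ n / (n.factorial : F)))
            • ev a b (mProd F k (i + n) (mProd F k j f g) h))]
      · refine Finset.sum_congr rfl fun m _ => ?_
        rw [Finset.sum_comm]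
        refine Finset.sum_congr rfl fun j hj => Finset.sum_congr rfl fun n _ => ?_
        have hj' : j ≤ m := by simpa [Nat.lt_succ_iff] using hj
        obtain ⟨i, rfl⟩ := Nat.exists_eq_add_of_le hj'
        rw [show j + i + n - j = i + n by omega, Nat.add_sub_cancel_left,
          Nat.cast_choose F hj', Nat.add_sub_cancel_left]
        simp only [smul_smul]
        congr 1
        have h1 : (j.factorial : F) ≠ 0 := by exact_mod_cast j.factorial_ne_zero
        have h2 : (i.factorial : F) ≠ 0 := by exact_mod_cast i.factorial_ne_zero
        have h3 : (n.factorial : F) ≠ 0 := by exact_mod_cast n.factorial_ne_zero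
        have h4 : ((j + i).factorial : F) ≠ 0 := by exact_mod_cast (j + i).factorial_ne_zero
        rw [pow_add]
        field_simp
      · intro j i hji
        refine Finset.sum_eq_zero fun n _ => ?_
        rw [hc j (i + n) (by omega)]
        simp
    have R2 : ∑ j ∈ range M, (l ^ j / (j.factorial : F)) • ∑ r ∈ range M,
          ((l + x) ^ r / (r.factorial : F)) • ev a b (mProd F k r (mProd F k j f g) h) =
        (ev a (-a - l) f * ev (a + l) (-a - (l + x)) g
          - ev a (-a - (l + x) + l) g * ev (-(-a - (l + x)) - l) (-a - (l + x)) f)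
            * ev (a + (l + x)) b h
        - ev a (b + (l + x)) h * (ev (-b - (l + x)) (-(-b - (l + x)) - l) f *
            ev (-b - (l + x) + l) b g - ev (-b - (l + x)) (b + l) g * ev (-b - l) b f) := by
      rw [← Kfg.2, ← Kfg.2, Finset.mul_sum, Finset.sum_mul, ← Finset.sum_sub_distrib]
      refine Finset.sum_congr rfl fun n _ => ?_
      rw [(Kl n).2, smul_sub, mul_smul_comm, smul_mul_assoc]
    rw [R, R2]
    simp only [smul_sub, Finset.sum_sub_distrib]
    rw [L1, L2]
    simp only [show -(a + l) - x = -a - (l + x) by ring, show a + l + x = a + (l + x) by ring,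
      show b + l + x = b + (l + x) by ring, show -(b + l) - x = -b - (l + x) by ring,
      show -(a + x) - l = -a - (l + x) by ring, show a + x + l = a + (l + x) by ring,
      show b + x + l = b + (l + x) by ring, show -(b + x) - l = -b - (l + x) by ring,
      show -a - (l + x) + l = -a - x by ring, show -(-a - (l + x)) - l = a + x by ring,
      show -(-b - (l + x)) - l = b + x by ring, show -b - (l + x) + l = -b - x by ring]
    noncomm_ring
  have S1 := fun x : F => coeff_unique' (F := F) M _ _ (fun l => G l x) m hm
  exact coeff_unique' (F := F) M _ _ S1 n hn

end MKK

/-- `(R_{k×k}, ∂, products)` is a conformal algebra: locality, sesquilinearity,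
skew-symmetry and the Jacobi identity hold. -/
theorem mkk_is_conformal_algebra (F : Type*) [Field F] [CharZero F]
    (k : ℕ) (hk : 1 ≤ k) :
    -- locality
    (∀ f g : MatCarrier F k, ∃ N : ℕ, ∀ n ≥ N, mProd F k n f g = 0) ∧
    -- sesquilinearity
    (∀ f g : MatCarrier F k, mProd F k 0 (mD F k f) g = 0) ∧
    (∀ (n : ℕ) (f g : MatCarrier F k),
      mProd F k (n + 1) (mD F k f) g = -(((n + 1 : ℕ) : F)) • mProd F k n f g) ∧
    -- skew-symmetry
    (∀ (n N : ℕ) (f g : MatCarrier F k), (∀ j ≥ N, mProd F k (n + j) g f = 0) →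
      mProd F k n f g = ∑ j ∈ Finset.range N,
        ((-1 : F) ^ (n + j + 1) * ((j.factorial : F)⁻¹)) •
          ((mD F k)^[j] (mProd F k (n + j) g f))) ∧
    -- Jacobi identity
    (∀ (m n : ℕ) (f g h : MatCarrier F k),
      mProd F k m f (mProd F k n g h) - mProd F k n g (mProd F k m f h) =
        ∑ j ∈ Finset.range (m + 1),
          ((m.choose j : F)) • mProd F k (m + n - j) (mProd F k j f g) h) := by
  refine ⟨fun f g => ?_, fun f g => ?_, fun n f g => ?_, fun n N f g h => ?_, fun m n f g h => ?_⟩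
  · obtain ⟨N, hN⟩ := (MKK.K_ex f g).exists
    exact ⟨N, fun n hn => hN.1 n hn⟩
  · exact MKK.ev_inj fun a b => by rw [(MKK.sesqui f g a b).1, map_zero]
  · exact MKK.ev_inj fun a b => by rw [(MKK.sesqui f g a b).2, map_smul]
  · refine MKK.ev_inj fun a b => ?_
    rw [MKK.skew f g n N h a b, map_sum]
    simp only [map_smul, MKK.ev_D_iter]
  · refine MKK.ev_inj fun a b => ?_
    rw [map_sub, MKK.jacobi, map_sum]
    simp only [map_smul]
end

section
/- The conformal algebra R_{k×k} is simple: its products are not all zero, and every nonzero subspace I ⊆ R_{k×k} with ∂(I) ⊆ I and u⁽ⁿ⁾w ∈ I for all u ∈ R_{k×k}, w ∈ I, n ∈ ℕ equals R_{k×k}. -/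
/-- Operator acting on the first factor only. -/
noncomputable def opA (F : Type*) [Field F] (k s M : ℕ) (u : Matrix (Fin k) (Fin k) F) :
    MatCarrier F k →ₗ[F] MatCarrier F k :=
  Finsupp.lsum F fun q : ℕ × ℕ =>
    if s ≤ M + q.1 then
      ((-1 : F) ^ M * ((q.1 + M).choose M : F)) •
        ((Finsupp.lsingle (M + q.1 - s, q.2)).comp (LinearMap.mulLeft F u))
    else 0

/-- Operator acting on the second factor only. -/
noncomputable def opB (F : Type*) [Field F] (k s M : ℕ) (u : Matrix (Fin k) (Fin k) F) :
    MatCarrier F k →ₗ[F] MatCarrier F k :=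
  Finsupp.lsum F fun q : ℕ × ℕ =>
    if s ≤ M + q.2 then
      ((-1 : F) ^ M * ((q.2 + M).choose M : F)) •
        ((Finsupp.lsingle (q.1, M + q.2 - s)).comp (LinearMap.mulRight F u))
    else 0

lemma opA_single (F : Type*) [Field F] (k s M : ℕ) (u v : Matrix (Fin k) (Fin k) F)
    (q : ℕ × ℕ) : opA F k s M u (Finsupp.single q v) =
      if s ≤ M + q.1 then ((-1 : F) ^ M * ((q.1 + M).choose M : F)) •
        Finsupp.single (M + q.1 - s, q.2) (u * v) else 0 := by
  rw [opA, Finsupp.lsum_single]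
  split_ifs <;> simp

lemma opB_single (F : Type*) [Field F] (k s M : ℕ) (u v : Matrix (Fin k) (Fin k) F)
    (q : ℕ × ℕ) : opB F k s M u (Finsupp.single q v) =
      if s ≤ M + q.2 then ((-1 : F) ^ M * ((q.2 + M).choose M : F)) •
        Finsupp.single (q.1, M + q.2 - s) (v * u) else 0 := by
  rw [opB, Finsupp.lsum_single]
  split_ifs <;> simp

lemma mProd_opA (F : Type*) [Field F] (k s M : ℕ) (u : Matrix (Fin k) (Fin k) F)
    (g : MatCarrier F k) (hg : ∀ q ∈ g.support, q.2 < s) :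
    mProd F k s (Finsupp.single (0, M) u) g = opA F k s M u g := by
  have h1 : opA F k s M u g = g.sum fun q v => opA F k s M u (Finsupp.single q v) := by
    conv_lhs => rw [← Finsupp.sum_single g]
    rw [map_finsuppSum]
  rw [h1, mProd, Finsupp.sum_single_index]
  · refine Finsupp.sum_congr fun q hq => ?_
    have h := hg q hq
    rw [opA_single]
    have h2 : (if s ≤ 0 + M + q.2 then
      ((-1 : F) ^ 0 * ((q.2 + 0).choose 0 : F) *
        ((0 + M + q.2 - s).choose M : F)) •
        Finsupp.single (q.1, 0 + M + q.2 - s) (g q * u)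
     else 0) = 0 := by
      split_ifs with h3
      · rw [Nat.choose_eq_zero_of_lt (show 0 + M + q.2 - s < M by omega)]; simp
      · rfl
    simp only [] at h2 ⊢
    rw [h2]
    simp
  · simp

lemma mProd_opB (F : Type*) [Field F] (k s M : ℕ) (u : Matrix (Fin k) (Fin k) F)
    (g : MatCarrier F k) (hg : ∀ q ∈ g.support, q.1 < s) :
    mProd F k s (Finsupp.single (M, 0) u) g = - opB F k s M u g := by
  have h1 : opB F k s M u g = g.sum fun q v => opB F k s M u (Finsupp.single q v) := by
    conv_lhs => rw [← Finsupp.sum_single g]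
    rw [map_finsuppSum]
  rw [h1, mProd, Finsupp.sum_single_index]
  · rw [← Finsupp.sum_neg]
    refine Finsupp.sum_congr fun q hq => ?_
    have h := hg q hq
    rw [opB_single]
    have h2 : (if s ≤ M + 0 + q.1 then
      ((-1 : F) ^ 0 * ((q.1 + 0).choose 0 : F) *
        ((M + 0 + q.1 - s).choose M : F)) •
        Finsupp.single (M + 0 + q.1 - s, q.2) (u * g q)
     else 0) = 0 := by
      split_ifs with h3
      · rw [Nat.choose_eq_zero_of_lt (show M + 0 + q.1 - s < M by omega)]; simp
      · rfl
    simp only [] at h2 ⊢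
    rw [h2]
    simp
  · simp

lemma exists_opA (F : Type*) [Field F] (k : ℕ) (I : Submodule F (MatCarrier F k))
    (hI : ∀ (u : MatCarrier F k), ∀ w ∈ I, ∀ n : ℕ, mProd F k n u w ∈ I)
    (g : MatCarrier F k) (hg : g ∈ I) (c : ℕ) :
    ∃ s, c ≤ s ∧ ∀ M u, opA F k s M u g ∈ I := by
  refine ⟨c + (g.support.sup Prod.snd + 1), by omega, fun M u => ?_⟩
  rw [← mProd_opA]
  · exact hI _ _ hg _
  · intro q hq
    have := Finset.le_sup (f := Prod.snd) hq
    omega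

lemma exists_opB (F : Type*) [Field F] (k : ℕ) (I : Submodule F (MatCarrier F k))
    (hI : ∀ (u : MatCarrier F k), ∀ w ∈ I, ∀ n : ℕ, mProd F k n u w ∈ I)
    (g : MatCarrier F k) (hg : g ∈ I) (c : ℕ) :
    ∃ s, c ≤ s ∧ ∀ M u, opB F k s M u g ∈ I := by
  refine ⟨c + (g.support.sup Prod.fst + 1), by omega, fun M u => ?_⟩
  rw [← Submodule.neg_mem_iff, ← mProd_opB]
  · exact hI _ _ hg _
  · intro q hq
    have := Finset.le_sup (f := Prod.fst) hq
    omega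

lemma smul_cancel_mem (F : Type*) [Field F] [CharZero F] (k : ℕ)
    (I : Submodule F (MatCarrier F k)) (x : MatCarrier F k) (M n : ℕ)
    (h : ((-1 : F) ^ M * ((n + M).choose M : F)) • x ∈ I) : x ∈ I := by
  refine (I.smul_mem_iff ?_).1 h
  refine mul_ne_zero (pow_ne_zero _ (by simp)) ?_
  exact_mod_cast (Nat.choose_pos (by omega)).ne'

lemma opA_top (F : Type*) [Field F] [CharZero F] (k : ℕ) (I : Submodule F (MatCarrier F k))
    (hI : ∀ (u : MatCarrier F k), ∀ w ∈ I, ∀ n : ℕ, mProd F k n u w ∈ I)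
    (g : MatCarrier F k) (hg : g ∈ I) (a b : ℕ) (hab : g (a, b) ≠ 0) 
    (ha : ∀ q ∈ g.support, q.1 ≤ a) (hb : ∀ q ∈ g.support, q.1 = a → q.2 ≤ b)
    (u u' : Matrix (Fin k) (Fin k) F) :
    Finsupp.single (0, 0) (u * g (a, b) * u') ∈ I := by
  obtain ⟨s, hs, h⟩ := exists_opA F k I hI g hg a
  obtain ⟨s', hs', h'⟩ := exists_opB F k I hI _ (h (s - a) u) b
  have h2 := h' (s' - b) u'
  have key : opB F k s' (s' - b) u' (opA F k s (s - a) u g) =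
      ((-1 : F) ^ (s' - b) * ((b + (s' - b)).choose (s' - b) : F)) •
      ((-1 : F) ^ (s - a) * ((a + (s - a)).choose (s - a) : F)) •
        Finsupp.single (0, 0) (u * g (a, b) * u') := by
    conv_lhs => rw [← Finsupp.sum_single g]
    rw [map_finsuppSum, map_finsuppSum, Finsupp.sum, Finset.sum_eq_single (a, b)]
    · rw [opA_single, if_pos (by simp only []; omega), map_smul, opB_single,
        if_pos (by simp only []; omega), smul_comm]
      have e1 : s - a + a - s = 0 := by omega
      have e2 : s' - b + b - s' = 0 := by omega
      simp only [e1, e2]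
    · intro q hq hne
      have h3 := ha q hq
      have h4 := hb q hq
      rw [opA_single]
      split_ifs with h5
      · have h6 : q.1 = a := by omega
        have h7 : q.2 ≠ b := fun h => hne (Prod.ext h6 h)
        have h8 := h4 h6
        rw [map_smul, opB_single, if_neg (by simp only []; omega), smul_zero]
      · simp
    · intro hn
      exact absurd (Finsupp.notMem_support_iff.1 hn) hab
  rw [key] at h2
  exact smul_cancel_mem F k I _ _ _ (smul_cancel_mem F k I _ _ _ h2)

/-- The conformal algebra `R_{k×k}` is simple: its products are not all zero, and
every nonzero subspace `I` closed under `∂` and under all left multiplications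
`u⁽ⁿ⁾·` equals all of `R_{k×k}`. -/
theorem mkk_is_simple (F : Type*) [Field F] [CharZero F] (k : ℕ) (hk : 1 ≤ k) :
    (∃ (s : ℕ) (f g : MatCarrier F k), mProd F k s f g ≠ 0) ∧
    (∀ I : Submodule F (MatCarrier F k),
      (∀ x ∈ I, mD F k x ∈ I) →
      (∀ (u : MatCarrier F k), ∀ w ∈ I, ∀ n : ℕ, mProd F k n u w ∈ I) →
      I ≠ ⊥ → I = ⊤) := by
  constructor
  · refine ⟨1, Finsupp.single (0, 0) 1, Finsupp.single (1, 0) 1, ?_⟩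
    haveI : Nonempty (Fin k) := ⟨⟨0, hk⟩⟩
    rw [mProd_opA]
    · rw [opA_single]
      simp
    · intro q hq
      have := Finsupp.support_single_subset hq
      simp only [Finset.mem_singleton] at this
      simp [this]
  · intro I _ hI hne
    obtain ⟨w, hw, hw0⟩ := I.exists_mem_ne_zero_of_ne_bot hne
    have hsup : w.support.Nonempty := Finsupp.support_nonempty_iff.2 hw0
    obtain ⟨q0, hq0, hmax⟩ := Finset.exists_max_image w.support Prod.fst hsup
    obtain ⟨q1, hq1, hmax1⟩ := Finset.exists_max_image
      (w.support.filter fun q => q.1 = q0.1) Prod.snd ⟨q0, by simp [Finset.mem_filter, Finsupp.mem_support_iff.1 hq0]⟩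
    rw [Finset.mem_filter] at hq1
    have hv : w (q1.1, q1.2) ≠ 0 := Finsupp.mem_support_iff.1 hq1.1
    have h0 := opA_top F k I hI w hw q1.1 q1.2 hv
      (fun q hq => hq1.2 ▸ hmax q hq)
      (fun q hq h => hmax1 q (Finset.mem_filter.2 ⟨hq, h.trans hq1.2⟩))
    generalize w (q1.1, q1.2) = v at hv h0
    have hv' : ∃ i j, v i j ≠ 0 := by
      by_contra! h
      exact hv (by ext i j; exact h i j)
    obtain ⟨i, j, hij⟩ := hv'
    have h00 : ∀ x : Matrix (Fin k) (Fin k) F, Finsupp.single ((0 : ℕ), (0 : ℕ)) x ∈ I := by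
      intro x
      induction x using Matrix.induction_on' with
      | h_zero => simp
      | h_add p q hp hq => rw [Finsupp.single_add]; exact I.add_mem hp hq
      | h_std_basis r t c =>
        have := h0 (Matrix.single r i (c * (v i j)⁻¹)) (Matrix.single j t 1)
        have e : Matrix.single r i (c * (v i j)⁻¹) * v * Matrix.single j t 1
            = Matrix.single r t c := by
          rw [Matrix.single_mul_mul_single]
          simp [hij]
        rwa [e] at this
    have ha0 : ∀ (a : ℕ) (x : Matrix (Fin k) (Fin k) F), Finsupp.single (a, (0 : ℕ)) x ∈ I := by
      intro a x
      obtain ⟨s, -, h⟩ := exists_opA F k I hI _ (h00 x) 0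
      have := h (s + a) 1
      rw [opA_single, if_pos (by simp only []; omega)] at this
      have := smul_cancel_mem F k I _ _ _ this
      simpa using this
    have hab : ∀ (a b : ℕ) (x : Matrix (Fin k) (Fin k) F), Finsupp.single (a, b) x ∈ I := by
      intro a b x
      obtain ⟨s, -, h⟩ := exists_opB F k I hI _ (ha0 a x) 0
      have := h (s + b) 1
      rw [opB_single, if_pos (by simp only []; omega)] at this
      have := smul_cancel_mem F k I _ _ _ this
      simpa using this
    rw [eq_top_iff]
    intro x _
    rw [← Finsupp.sum_single x]
    exact I.sum_mem fun q _ => hab q.1 q.2 _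
end

section
/- For every ℓ ≥ 1, the subspace R_{k×k,ℓ} of R_{k×k} is a conformal subalgebra (closed under ∂ and under all n-th products), it is a simple conformal algebra in its own right, and its minimal weight is ℓ: R_{k×k,ℓ} ∩ R_{k×k}^{(n)} = {0} for n < ℓ while R_{k×k,ℓ} ∩ R_{k×k}^{(ℓ)} ≠ {0}, where R_{k×k}^{(n)} = span{u(m₁,m₂) : u ∈ A, m₁+m₂+1 = n}. -/
/-- The subspace `R_{k×k,ℓ} = span{u(m, n+ℓ-1) : u ∈ A, m, n ∈ ℕ}` (`ℓ ≥ 1`). -/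
noncomputable def Rkkl (F : Type*) [Field F] (k ℓ : ℕ) :
    Submodule F (MatCarrier F k) :=
  Submodule.span F {x | ∃ (u : Matrix (Fin k) (Fin k) F) (m n : ℕ),
    x = Finsupp.single (m, n + ℓ - 1) u}

section helpers

variable {F : Type*} [Field F] {k : ℕ}

theorem single_mem_Rkkl {ℓ : ℕ} {m n : ℕ} (h : ℓ - 1 ≤ n) (hℓ : 1 ≤ ℓ)
    (u : Matrix (Fin k) (Fin k) F) :
    (Finsupp.single (m, n) u : MatCarrier F k) ∈ Rkkl F k ℓ := by
  apply Submodule.subset_span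
  refine ⟨u, m, n - (ℓ - 1), ?_⟩
  have : n - (ℓ - 1) + ℓ - 1 = n := by omega
  rw [this]

theorem mem_Rkkl_iff {ℓ : ℕ} (hℓ : 1 ≤ ℓ) (x : MatCarrier F k) :
    x ∈ Rkkl F k ℓ ↔ ∀ q : ℕ × ℕ, x q ≠ 0 → ℓ - 1 ≤ q.2 := by
  constructor
  · intro hx
    induction hx using Submodule.span_induction with
    | mem x h =>
      obtain ⟨u, m, n, rfl⟩ := h
      intro q hq
      by_cases h : (m, n + ℓ - 1) = q
      · subst h; simp only; omega
      · exact absurd (Finsupp.single_eq_of_ne' h) hq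
    | zero => intro q hq; simp at hq
    | add x y _ _ hx hy =>
      intro q hq
      by_cases h : x q = 0
      · apply hy
        intro h'
        apply hq
        simp [h, h']
      · exact hx q h
    | smul a x _ hx =>
      intro q hq
      apply hx
      intro h
      apply hq
      simp [h]
  · intro h
    rw [← Finsupp.sum_single x]
    apply Submodule.sum_mem
    intro q hq
    exact single_mem_Rkkl (m := q.1) (h q (by simpa using hq)) hℓ _

theorem mem_mWeight {n : ℕ} {x : MatCarrier F k} (hx : x ∈ mWeight F k n) :
    ∀ q : ℕ × ℕ, x q ≠ 0 → q.1 + q.2 + 1 = n := by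
  induction hx using Submodule.span_induction with
  | mem x h =>
    obtain ⟨u, m, n, hh, rfl⟩ := h
    intro q hq
    by_cases h : (m, n) = q
    · subst h; exact hh
    · exact absurd (Finsupp.single_eq_of_ne' h) hq
  | zero => intro q hq; simp at hq
  | add x y _ _ hx hy =>
    intro q hq
    by_cases h : x q = 0
    · apply hy
      intro h'
      apply hq
      simp [h, h']
    · exact hx q h
  | smul a x _ hx =>
    intro q hq
    apply hx
    intro h
    apply hq
    simp [h]

/-- The product of two monomials. -/
noncomputable def mTerm (s : ℕ) (p : ℕ × ℕ) (u : Matrix (Fin k) (Fin k) F) (q : ℕ × ℕ)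
    (v : Matrix (Fin k) (Fin k) F) : MatCarrier F k :=
    (if s ≤ p.1 + p.2 + q.1 then
      ((-1 : F) ^ p.2 * ((q.1 + p.2).choose p.2 : F) *
        ((p.1 + p.2 + q.1 - s).choose p.1 : F)) •
        Finsupp.single (p.1 + p.2 + q.1 - s, q.2) (u * v)
     else 0) -
    (if s ≤ p.1 + p.2 + q.2 then
      ((-1 : F) ^ p.1 * ((q.2 + p.1).choose p.1 : F) *
        ((p.1 + p.2 + q.2 - s).choose p.2 : F)) •
        Finsupp.single (q.1, p.1 + p.2 + q.2 - s) (v * u)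
     else 0)

theorem mProd_single (s : ℕ) (p : ℕ × ℕ) (u : Matrix (Fin k) (Fin k) F) (g : MatCarrier F k) :
    mProd F k s (Finsupp.single p u) g = g.sum (mTerm s p u) := by
  unfold mProd
  rw [Finsupp.sum_single_index]
  · rfl
  · simp

theorem mProd_single_single (s : ℕ) (p : ℕ × ℕ) (u : Matrix (Fin k) (Fin k) F) (q : ℕ × ℕ)
    (v : Matrix (Fin k) (Fin k) F) :
    mProd F k s (Finsupp.single p u) (Finsupp.single q v) = mTerm s p u q v := by
  rw [mProd_single, Finsupp.sum_single_index]
  simp [mTerm]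

/-- Only the left part survives. -/
theorem mTerm_left (s : ℕ) (p : ℕ × ℕ) (u : Matrix (Fin k) (Fin k) F) (q : ℕ × ℕ)
    (v : Matrix (Fin k) (Fin k) F) (h : p.1 + q.2 < s) :
    mTerm s p u q v = (if s ≤ p.1 + p.2 + q.1 then
      ((-1 : F) ^ p.2 * ((q.1 + p.2).choose p.2 : F) *
        ((p.1 + p.2 + q.1 - s).choose p.1 : F)) •
        Finsupp.single (p.1 + p.2 + q.1 - s, q.2) (u * v)
     else 0) := by
  unfold mTerm
  by_cases h2 : s ≤ p.1 + p.2 + q.2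
  · rw [Nat.choose_eq_zero_of_lt (show p.1 + p.2 + q.2 - s < p.2 by omega)]
    simp
  · rw [if_neg h2, sub_zero]

/-- Only the right part survives. -/
theorem mTerm_right (s : ℕ) (p : ℕ × ℕ) (u : Matrix (Fin k) (Fin k) F) (q : ℕ × ℕ)
    (v : Matrix (Fin k) (Fin k) F) (h : p.2 + q.1 < s) :
    mTerm s p u q v = - (if s ≤ p.1 + p.2 + q.2 then
      ((-1 : F) ^ p.1 * ((q.2 + p.1).choose p.1 : F) *
        ((p.1 + p.2 + q.2 - s).choose p.2 : F)) •
        Finsupp.single (q.1, p.1 + p.2 + q.2 - s) (v * u)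
     else 0) := by
  unfold mTerm
  by_cases h2 : s ≤ p.1 + p.2 + q.1
  · rw [Nat.choose_eq_zero_of_lt (show p.1 + p.2 + q.1 - s < p.1 by omega)]
    simp
  · rw [if_neg h2, zero_sub]

theorem mTerm_mem {ℓ : ℕ} (hℓ : 1 ≤ ℓ) (s : ℕ) (p : ℕ × ℕ) (u : Matrix (Fin k) (Fin k) F)
    (q : ℕ × ℕ) (v : Matrix (Fin k) (Fin k) F) (hp : ℓ - 1 ≤ p.2) (hq : ℓ - 1 ≤ q.2) :
    mTerm s p u q v ∈ Rkkl F k ℓ := by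
  unfold mTerm
  apply Submodule.sub_mem
  · split_ifs
    · exact Submodule.smul_mem _ _ (single_mem_Rkkl hq hℓ _)
    · exact Submodule.zero_mem _
  · split_ifs
    · by_cases h : p.1 + p.2 + q.2 - s < p.2
      · rw [Nat.choose_eq_zero_of_lt h]
        simp
      · exact Submodule.smul_mem _ _ (single_mem_Rkkl (by omega) hℓ _)
    · exact Submodule.zero_mem _

variable [CharZero F]

theorem coef_ne (a b c d e : ℕ) (h1 : c ≤ b) (h2 : e ≤ d) :
    ((-1 : F) ^ a * (b.choose c : F) * (d.choose e : F)) ≠ 0 := by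
  have := (Nat.choose_pos h1).ne'
  have := (Nat.choose_pos h2).ne'
  simp_all

theorem ideal_top {ℓ : ℕ} (hℓ : 1 ≤ ℓ) (I : Submodule F (MatCarrier F k))
    (hI : I ≤ Rkkl F k ℓ)
    (hP : ∀ u ∈ Rkkl F k ℓ, ∀ w ∈ I, ∀ s : ℕ, mProd F k s u w ∈ I)
    (w : MatCarrier F k) (hw : w ∈ I) (hw0 : w ≠ 0) : I = Rkkl F k ℓ := by
  -- Step A: an element of `I` supported on `q.1 = 0`
  obtain ⟨g, hg, hg0, hgs⟩ : ∃ g ∈ I, g ≠ 0 ∧ ∀ q : ℕ × ℕ, g q ≠ 0 → q.1 = 0 := by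
    have hne : w.support.Nonempty := Finsupp.support_nonempty_iff.mpr hw0
    obtain ⟨q0, hq0, hmax⟩ := Finset.exists_max_image w.support (fun q => q.1) hne
    set N := w.support.sup (fun q => q.2) with hN
    have hNle : ∀ q ∈ w.support, q.2 ≤ N := fun q hq =>
      Finset.le_sup (f := fun q : ℕ × ℕ => q.2) hq
    set p2 := N + ℓ with hp2
    set c : F := ((-1 : F) ^ p2 * ((q0.1 + p2).choose p2 : F) * ((0 : ℕ).choose 0 : F)) with hc
    have hc0 : c ≠ 0 := coef_ne _ _ _ _ _ (by omega) (by omega)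
    have key : mProd F k (p2 + q0.1) (Finsupp.single (0, p2) 1) w
        = w.sum fun q v => if q.1 = q0.1 then c • Finsupp.single (0, q.2) v else 0 := by
      rw [mProd_single]
      apply Finset.sum_congr rfl
      intro q hq
      have h1 := hmax q hq
      have h2 := hNle q hq
      rw [mTerm_left _ _ _ _ _ (by simp only; omega)]
      beta_reduce
      by_cases h : q.1 = q0.1
      · rw [if_pos h, if_pos (by simp only; omega)]
        have e : 0 + p2 + q0.1 - (p2 + q0.1) = 0 := by omega
        simp only [e, one_mul, hc, h]
      · rw [if_neg h, if_neg (by simp only; omega)]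
    refine ⟨_, hP _ (single_mem_Rkkl (m := 0) (n := p2) (by omega) hℓ 1) w hw (p2 + q0.1), ?_, ?_⟩
    · intro h0
      rw [key] at h0
      have h1 := DFunLike.congr_fun h0 (0, q0.2)
      rw [Finsupp.sum, Finsupp.finsetSum_apply, Finset.sum_eq_single q0] at h1
      · simp [hc0] at h1
        simp [h1] at hq0
      · intro q hq hne
        split_ifs with h
        · have : q.2 ≠ q0.2 := fun h' => hne (Prod.ext h h')
          rw [Finsupp.smul_apply, Finsupp.single_eq_of_ne', smul_zero]
          intro h'
          exact this (Prod.ext_iff.mp h').2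
        · rfl
      · intro h; exact absurd hq0 h
    · intro r hr
      rw [key, Finsupp.sum, Finsupp.finsetSum_apply] at hr
      obtain ⟨q, _, hq⟩ := Finset.exists_ne_zero_of_sum_ne_zero hr
      split_ifs at hq with h
      · by_contra hr0
        apply hq
        rw [Finsupp.smul_apply, Finsupp.single_eq_of_ne', smul_zero]
        intro h'
        exact hr0 (Prod.ext_iff.mp h').1.symm
      · simp at hq
  -- Step B
  obtain ⟨a, ha0, ha⟩ : ∃ a : Matrix (Fin k) (Fin k) F, a ≠ 0 ∧
      ∀ v, (Finsupp.single (0, ℓ - 1) (a * v) : MatCarrier F k) ∈ I := by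
    have hne : g.support.Nonempty := Finsupp.support_nonempty_iff.mpr hg0
    obtain ⟨q0, hq0, hmax⟩ := Finset.exists_max_image g.support (fun q => q.2) hne
    refine ⟨g q0, by simpa using hq0, fun v => ?_⟩
    have hz : q0.1 = 0 := hgs q0 (by simpa using hq0)
    have hR := (mem_Rkkl_iff hℓ g).mp (hI hg)
    have hQ := hR q0 (by simpa using hq0)
    have hmem := hP _ (single_mem_Rkkl (m := ℓ) (n := ℓ - 1) le_rfl hℓ v) g hg (ℓ + q0.2)
    rw [mProd_single, Finsupp.sum, Finset.sum_eq_single q0] at hmem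
    · rw [mTerm_right _ _ _ _ _ (by simp only; omega), if_pos (by simp only; omega)] at hmem
      have hmem' := I.neg_mem hmem
      rw [neg_neg, Submodule.smul_mem_iff _ (coef_ne _ _ _ _ _ (by simp only; omega)
        (by simp only; omega))] at hmem'
      have e : ℓ + (ℓ - 1) + q0.2 - (ℓ + q0.2) = ℓ - 1 := by omega
      simpa only [hz, e] using hmem'
    · intro q hq hqne
      have h1 := hmax q hq
      have hqz : q.1 = 0 := hgs q (by simpa using hq)
      have hlt : q.2 < q0.2 := by
        rcases Nat.lt_or_eq_of_le h1 with h | h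
        · exact h
        · exact absurd (Prod.ext (hqz.trans hz.symm) h) hqne
      rw [mTerm_right _ _ _ _ _ (by simp only; omega)]
      split_ifs with h
      · rw [Nat.choose_eq_zero_of_lt
          (show ℓ + (ℓ - 1) + q.2 - (ℓ + q0.2) < ℓ - 1 by simp only at h; omega)]
        simp
      · simp
    · intro h; exact absurd hq0 h
  -- Step C
  have stepC : ∀ (m n : ℕ) (b u : Matrix (Fin k) (Fin k) F), ℓ - 1 ≤ n →
      (Finsupp.single (0, n) b : MatCarrier F k) ∈ I →
      (Finsupp.single (m, n) (u * b) : MatCarrier F k) ∈ I := by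
    intro m n b u hn hb
    have hmem := hP _ (single_mem_Rkkl (m := 0) (n := n + m + 1) (by omega) hℓ u) _ hb (n + 1)
    rw [mProd_single_single, mTerm_left _ _ _ _ _ (by simp only; omega),
      if_pos (by simp only; omega), Submodule.smul_mem_iff _ (coef_ne _ _ _ _ _
        (by simp only; omega) (by simp only; omega))] at hmem
    have e : 0 + (n + m + 1) + 0 - (n + 1) = m := by omega
    simpa only [e] using hmem
  -- Step D
  have stepD : ∀ (d : ℕ) (b : Matrix (Fin k) (Fin k) F),
      (Finsupp.single (0, ℓ - 1) b : MatCarrier F k) ∈ I →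
      (Finsupp.single (0, ℓ - 1 + d) b : MatCarrier F k) ∈ I := by
    intro d b hb
    have hmem := hP _ (single_mem_Rkkl (m := d + 1) (n := ℓ - 1) le_rfl hℓ 1) _ hb ℓ
    rw [mProd_single_single, mTerm_right _ _ _ _ _ (by simp only; omega),
      if_pos (by simp only; omega)] at hmem
    have hmem' := I.neg_mem hmem
    rw [neg_neg, Submodule.smul_mem_iff _ (coef_ne _ _ _ _ _
        (by simp only; omega) (by simp only; omega))] at hmem'
    have e : d + 1 + (ℓ - 1) + (ℓ - 1) - ℓ = ℓ - 1 + d := by omega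
    simpa only [e, mul_one] using hmem'
  -- all matrices
  have hall : ∀ b : Matrix (Fin k) (Fin k) F,
      (Finsupp.single (0, ℓ - 1) b : MatCarrier F k) ∈ I := by
    obtain ⟨i, j, hij⟩ : ∃ i j, a i j ≠ 0 := by
      by_contra h
      push Not at h
      exact ha0 (Matrix.ext h)
    have hE : ∀ (x y : Fin k) (r : F),
        (Finsupp.single (0, ℓ - 1) (Matrix.single x y r) : MatCarrier F k) ∈ I := by
      intro x y r
      have h := stepC 0 (ℓ - 1) _ (Matrix.single x i (r * (a i j)⁻¹)) le_rfl
        (ha (Matrix.single j y 1))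
      rw [← mul_assoc, Matrix.single_mul_mul_single] at h
      simpa [hij] using h
    intro b
    rw [Matrix.matrix_eq_sum_single b, Finsupp.single_finsetSum]
    refine I.sum_mem fun x _ => ?_
    rw [Finsupp.single_finsetSum]
    exact I.sum_mem fun y _ => hE x y _
  apply le_antisymm hI
  unfold Rkkl
  rw [Submodule.span_le]
  rintro _ ⟨u, m, n, rfl⟩
  have h := stepC m _ _ 1 (by omega) (stepD n u (hall u))
  have e : ℓ - 1 + n = n + ℓ - 1 := by omega
  rw [one_mul, e] at h
  exact h

end helpers

/-- **Theorem 4.1** (for `R_{k×k,ℓ}`): for every `ℓ ≥ 1`, `R_{k×k,ℓ}` is a conformal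
subalgebra of `R_{k×k}` (closed under `∂` and all `n`-th products), it is a simple
conformal algebra in its own right, and its minimal weight is `ℓ`. -/
theorem Rkkl_simple_subalgebra (F : Type*) [Field F] [CharZero F]
    (k ℓ : ℕ) (hk : 1 ≤ k) (hℓ : 1 ≤ ℓ) :
    -- conformal subalgebra: closed under ∂ and under all n-th products
    (∀ x ∈ Rkkl F k ℓ, mD F k x ∈ Rkkl F k ℓ) ∧
    (∀ f ∈ Rkkl F k ℓ, ∀ g ∈ Rkkl F k ℓ, ∀ s : ℕ, mProd F k s f g ∈ Rkkl F k ℓ) ∧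
    -- simple: nonzero products and no nontrivial ideals
    (∃ f ∈ Rkkl F k ℓ, ∃ g ∈ Rkkl F k ℓ, ∃ s : ℕ, mProd F k s f g ≠ 0) ∧
    (∀ I : Submodule F (MatCarrier F k), I ≤ Rkkl F k ℓ →
      (∀ x ∈ I, mD F k x ∈ I) →
      (∀ u ∈ Rkkl F k ℓ, ∀ w ∈ I, ∀ s : ℕ, mProd F k s u w ∈ I) →
      I = ⊥ ∨ I = Rkkl F k ℓ) ∧
    -- minimal weight ℓ
    (∀ n < ℓ, Rkkl F k ℓ ⊓ mWeight F k n = ⊥) ∧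
    (Rkkl F k ℓ ⊓ mWeight F k ℓ ≠ ⊥) := by
  have : NeZero k := ⟨by omega⟩
  have one_ne : (1 : Matrix (Fin k) (Fin k) F) ≠ 0 := one_ne_zero
  refine ⟨?_, ?_, ?_, ?_, ?_, ?_⟩
  · intro x hx
    have h := (mem_Rkkl_iff hℓ x).mp hx
    apply Submodule.sum_mem
    intro q hq
    have hq' := h q (by simpa using hq)
    exact Submodule.add_mem _ (Submodule.smul_mem _ _ (single_mem_Rkkl hq' hℓ _))
      (Submodule.smul_mem _ _ (single_mem_Rkkl (by omega) hℓ _))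
  · intro f hf g hg s
    have h := (mem_Rkkl_iff hℓ f).mp hf
    have h' := (mem_Rkkl_iff hℓ g).mp hg
    apply Submodule.sum_mem
    intro p hp
    apply Submodule.sum_mem
    intro q hq
    exact mTerm_mem hℓ s p (f p) q (g q) (h p (by simpa using hp)) (h' q (by simpa using hq))
  · refine ⟨_, single_mem_Rkkl (m := 0) (n := ℓ - 1) le_rfl hℓ 1, _,
      single_mem_Rkkl (m := 1) (n := ℓ - 1) le_rfl hℓ 1, ℓ, ?_⟩
    rw [mProd_single_single, mTerm_left _ _ _ _ _ (by simp only; omega),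
      if_pos (by simp only; omega)]
    refine smul_ne_zero (coef_ne _ _ _ _ _ (by simp only; omega) (by simp only; omega)) ?_
    simp
  · intro I hI _ hP
    by_cases h : I = ⊥
    · exact Or.inl h
    · obtain ⟨w, hw, hw0⟩ := Submodule.exists_mem_ne_zero_of_ne_bot h
      exact Or.inr (ideal_top hℓ I hI hP w hw hw0)
  · intro n hn
    rw [eq_bot_iff]
    rintro x ⟨hx1, hx2⟩
    rw [Submodule.mem_bot]
    ext1 q
    by_contra hq
    have h1 := (mem_Rkkl_iff hℓ x).mp hx1 q hq
    have h2 := mem_mWeight hx2 q hq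
    omega
  · intro h
    have hm : (Finsupp.single (0, ℓ - 1) 1 : MatCarrier F k) ∈ Rkkl F k ℓ ⊓ mWeight F k ℓ :=
      ⟨single_mem_Rkkl le_rfl hℓ 1,
        Submodule.subset_span ⟨1, 0, ℓ - 1, by omega, rfl⟩⟩
    rw [h, Submodule.mem_bot] at hm
    simp at hm
end

section
/- Let k = 2k₁ be even. For every ℓ ≥ 1, the subspace R†_{k×k,ℓ} of R_{k×k} is a conformal subalgebra (closed under ∂ and under all n-th products), it is a simple conformal algebra in its own right, and its minimal weight is ℓ: R†_{k×k,ℓ} ∩ R_{k×k}^{(n)} = {0} for n < ℓ while R†_{k×k,ℓ} ∩ R_{k×k}^{(ℓ)} ≠ {0}, where R_{k×k}^{(n)} = span{u(m₁,m₂) : u ∈ A, m₁+m₂+1 = n}. -/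
/-- For even `k = k₁ + k₁`, the involutive anti-automorphism
`u† = [[0,-I],[I,0]] · uᵀ · [[0,I],[-I,0]]` of `M_k(F)`. -/
noncomputable def mDagger (F : Type*) [Field F] (k₁ : ℕ)
    (u : Matrix (Fin (k₁ + k₁)) (Fin (k₁ + k₁)) F) :
    Matrix (Fin (k₁ + k₁)) (Fin (k₁ + k₁)) F :=
  (Matrix.reindex finSumFinEquiv finSumFinEquiv
      (Matrix.fromBlocks (0 : Matrix (Fin k₁) (Fin k₁) F) (-1) 1 0)) *
    u.transpose *
  (Matrix.reindex finSumFinEquiv finSumFinEquiv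
      (Matrix.fromBlocks (0 : Matrix (Fin k₁) (Fin k₁) F) 1 (-1) 0))

/-- The subspace `R†_{k×k,ℓ} = span{binom(n+ℓ-1,ℓ-1)·u(m,n+ℓ-1)
- (-1)^{ℓ-1}·binom(m+ℓ-1,ℓ-1)·u†(n,m+ℓ-1) : u ∈ A, m, n ∈ ℕ}` (`ℓ ≥ 1`, `k = k₁+k₁`). -/
noncomputable def RkklDagger (F : Type*) [Field F] (k₁ ℓ : ℕ) :
    Submodule F (MatCarrier F (k₁ + k₁)) :=
  Submodule.span F {x | ∃ (u : Matrix (Fin (k₁ + k₁)) (Fin (k₁ + k₁)) F) (m n : ℕ),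
    x = (((n + ℓ - 1).choose (ℓ - 1) : F)) • Finsupp.single (m, n + ℓ - 1) u -
        ((-1 : F) ^ (ℓ - 1) * (((m + ℓ - 1).choose (ℓ - 1) : F))) •
          Finsupp.single (n, m + ℓ - 1) (mDagger F k₁ u)}

/-! ### The anti-involution -/

namespace RkAux

open Finsupp

variable {F : Type*} [Field F] {k₁ : ℕ}

noncomputable def jm (F : Type*) [Field F] (k₁ : ℕ) :
    Matrix (Fin (k₁ + k₁)) (Fin (k₁ + k₁)) F :=
  Matrix.reindex finSumFinEquiv finSumFinEquiv
      (Matrix.fromBlocks (0 : Matrix (Fin k₁) (Fin k₁) F) (-1) 1 0)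

lemma jm_transpose : (jm F k₁).transpose = -jm F k₁ := by
  unfold jm
  ext i j
  simp [Matrix.transpose_apply, Matrix.submatrix_apply]
  rcases finSumFinEquiv.symm i with a | a <;> rcases finSumFinEquiv.symm j with b | b <;>
    simp [Matrix.one_apply, eq_comm]

lemma jm_sq : jm F k₁ * jm F k₁ = -1 := by
  unfold jm
  simp only [Matrix.reindex_apply]
  rw [Matrix.submatrix_mul_equiv, Matrix.fromBlocks_multiply]
  ext i j
  simp only [Matrix.submatrix_apply, Matrix.neg_apply, Matrix.one_apply]
  obtain ⟨i, rfl⟩ := finSumFinEquiv.surjective i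
  obtain ⟨j, rfl⟩ := finSumFinEquiv.surjective j
  simp only [Equiv.symm_apply_apply, EmbeddingLike.apply_eq_iff_eq]
  rcases i with a | a <;> rcases j with b | b <;> simp [Matrix.one_apply]

lemma mDagger_eq (u : Matrix (Fin (k₁ + k₁)) (Fin (k₁ + k₁)) F) :
    mDagger F k₁ u = jm F k₁ * u.transpose * (-jm F k₁) := by
  unfold mDagger
  congr 1
  unfold jm
  ext i j
  simp only [Matrix.reindex_apply, Matrix.submatrix_apply, Matrix.neg_apply]
  rcases finSumFinEquiv.symm i with a | a <;> rcases finSumFinEquiv.symm j with b | b <;>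
    simp

noncomputable def dag (F : Type*) [Field F] (k₁ : ℕ) :
    Matrix (Fin (k₁ + k₁)) (Fin (k₁ + k₁)) F →ₗ[F]
    Matrix (Fin (k₁ + k₁)) (Fin (k₁ + k₁)) F where
  toFun := mDagger F k₁
  map_add' u v := by simp [mDagger_eq, mul_add, add_mul]; abel
  map_smul' c u := by simp [mDagger_eq]

lemma dag_apply (u : Matrix (Fin (k₁ + k₁)) (Fin (k₁ + k₁)) F) :
    dag F k₁ u = -(jm F k₁ * u.transpose * jm F k₁) := by
  change mDagger F k₁ u = _
  simp [mDagger_eq]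

lemma dag_mul (u v : Matrix (Fin (k₁ + k₁)) (Fin (k₁ + k₁)) F) :
    dag F k₁ (u * v) = dag F k₁ v * dag F k₁ u := by
  simp only [dag_apply, Matrix.transpose_mul, neg_mul_neg]
  have : jm F k₁ * v.transpose * jm F k₁ * (jm F k₁ * u.transpose * jm F k₁)
    = jm F k₁ * v.transpose * (jm F k₁ * jm F k₁) * u.transpose * jm F k₁ := by
    noncomm_ring
  rw [this, jm_sq]
  noncomm_ring

lemma dag_dag (u : Matrix (Fin (k₁ + k₁)) (Fin (k₁ + k₁)) F) :
    dag F k₁ (dag F k₁ u) = u := by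
  simp only [dag_apply, Matrix.transpose_neg, Matrix.transpose_mul, jm_transpose,
    Matrix.transpose_transpose]
  have : -(jm F k₁ * -(-jm F k₁ * (u * -jm F k₁)) * jm F k₁)
    = (jm F k₁ * jm F k₁) * u * (jm F k₁ * jm F k₁) := by
    noncomm_ring
  rw [this, jm_sq]
  noncomm_ring

lemma dag_one : dag F k₁ 1 = 1 := by
  simp [dag_apply, jm_sq]

lemma dag_jm : dag F k₁ (jm F k₁) = - jm F k₁ := by
  simp [dag_apply, jm_transpose, jm_sq]

/-- an element `a` such that `a - ε a†` is invertible (equal to `2 a`). -/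
lemma exists_good (L : ℕ) : ∃ a b : Matrix (Fin (k₁ + k₁)) (Fin (k₁ + k₁)) F,
    dag F k₁ a = -((-1 : F) ^ L • a) ∧ b * a = 1 := by
  rcases Nat.even_or_odd L with h | h
  · exact ⟨jm F k₁, -jm F k₁, by simp [h.neg_one_pow, dag_jm], by simp [jm_sq]⟩
  · exact ⟨1, 1, by simp [h.neg_one_pow, dag_one], by simp⟩

lemma eps_sq (L : ℕ) : (-1 : F) ^ L * (-1 : F) ^ L = 1 := by
  rw [← mul_pow]; simp

/-- two-sided ideal generated by a nonzero matrix. -/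
lemma top_of_sandwich {k : ℕ} (C : Submodule F (Matrix (Fin k) (Fin k) F))
    (c : Matrix (Fin k) (Fin k) F) (hc : c ≠ 0) (h : ∀ u v, u * c * v ∈ C) (a) : a ∈ C := by
  obtain ⟨p, q, hpq⟩ : ∃ p q, c p q ≠ 0 := by
    by_contra! hh
    exact hc (by ext i j; exact hh i j)
  rw [Matrix.matrix_eq_sum_single a]
  refine Submodule.sum_mem _ fun i _ => Submodule.sum_mem _ fun j _ => ?_
  have := h (Matrix.single i p (a i j * (c p q)⁻¹)) (Matrix.single q j 1)
  rw [Matrix.single_mul_mul_single] at this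
  simpa [hpq] using this

/-! ### Bilinear extension -/

noncomputable def bil {ι V W : Type*} [AddCommMonoid V] [Module F V] [AddCommMonoid W] [Module F W]
    (h : ι → ι → V →ₗ[F] V →ₗ[F] W) : (ι →₀ V) →ₗ[F] (ι →₀ V) →ₗ[F] W :=
  Finsupp.lsum F fun p => LinearMap.flip (Finsupp.lsum F fun q => (h p q).flip)

lemma bil_apply {ι V W : Type*} [AddCommMonoid V] [Module F V] [AddCommMonoid W] [Module F W]
    (h : ι → ι → V →ₗ[F] V →ₗ[F] W) (f g : ι →₀ V) :
    bil h f g = f.sum fun p u => g.sum fun q v => h p q u v := by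
  simp [bil, Finsupp.lsum_apply, Finsupp.sum, LinearMap.sum_apply]

lemma bil_single {ι V W : Type*} [AddCommMonoid V] [Module F V] [AddCommMonoid W] [Module F W]
    (h : ι → ι → V →ₗ[F] V →ₗ[F] W) (p q : ι) (u v : V) :
    bil h (single p u) (single q v) = h p q u v := by
  simp [bil]

noncomputable def mmul (F : Type*) [Field F] (k : ℕ) (p : ℕ × ℕ) :
    Matrix (Fin k) (Fin k) F →ₗ[F] Matrix (Fin k) (Fin k) F →ₗ[F] MatCarrier F k :=
  (LinearMap.mul F (Matrix (Fin k) (Fin k) F)).compr₂ (Finsupp.lsingle p)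

lemma mmul_apply {k : ℕ} (p : ℕ × ℕ) (u v : Matrix (Fin k) (Fin k) F) :
    mmul F k p u v = single p (u * v) := by simp [mmul]

noncomputable def prodL (F : Type*) [Field F] (k s : ℕ) :
    MatCarrier F k →ₗ[F] MatCarrier F k →ₗ[F] MatCarrier F k :=
  bil fun p q =>
    (if s ≤ p.1 + p.2 + q.1 then
      ((-1 : F) ^ p.2 * ((q.1 + p.2).choose p.2 : F) *
        ((p.1 + p.2 + q.1 - s).choose p.1 : F)) •
        mmul F k (p.1 + p.2 + q.1 - s, q.2)
     else 0) +
    (-1 : F) • (if s ≤ p.1 + p.2 + q.2 then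
      ((-1 : F) ^ p.1 * ((q.2 + p.1).choose p.1 : F) *
        ((p.1 + p.2 + q.2 - s).choose p.2 : F)) •
        (mmul F k (q.1, p.1 + p.2 + q.2 - s)).flip
     else 0)

lemma mProd_eq (k s : ℕ) (f g : MatCarrier F k) : mProd F k s f g = prodL F k s f g := by
  rw [prodL, bil_apply, mProd]
  refine Finsupp.sum_congr fun p _ => Finsupp.sum_congr fun q _ => ?_
  split_ifs <;> simp [mmul_apply, sub_eq_add_neg]

noncomputable def DL (F : Type*) [Field F] (k : ℕ) : MatCarrier F k →ₗ[F] MatCarrier F k :=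
  Finsupp.lsum F fun p =>
    (((p.1 + 1 : ℕ) : F)) • Finsupp.lsingle (p.1 + 1, p.2) +
    (((p.2 + 1 : ℕ) : F)) • Finsupp.lsingle (p.1, p.2 + 1)

lemma mD_eq (k : ℕ) (f : MatCarrier F k) : mD F k f = DL F k f := by
  simp only [DL, mD, Finsupp.lsum_apply]
  rfl

lemma DL_single (k m n : ℕ) (u : Matrix (Fin k) (Fin k) F) :
    DL F k (single (m, n) u) = (((m + 1 : ℕ) : F)) • single (m + 1, n) u +
    (((n + 1 : ℕ) : F)) • single (m, n + 1) u := by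
  simp [DL]

/-- multiplication by `Y^L / L!`. -/
noncomputable def psi (F : Type*) [Field F] (k L : ℕ) : MatCarrier F k →ₗ[F] MatCarrier F k :=
  Finsupp.lsum F fun p => ((p.2 + L).choose L : F) • Finsupp.lsingle (p.1, p.2 + L)

lemma psi_single (k L m n : ℕ) (u : Matrix (Fin k) (Fin k) F) :
    psi F k L (single (m, n) u) = ((n + L).choose L : F) • single (m, n + L) u := by
  simp [psi]

noncomputable def sg (F : Type*) [Field F] (k₁ : ℕ) :
    MatCarrier F (k₁ + k₁) →ₗ[F] MatCarrier F (k₁ + k₁) :=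
  Finsupp.lsum F fun p => (Finsupp.lsingle (p.2, p.1)).comp (dag F k₁)

lemma sg_single (m n : ℕ) (u : Matrix (Fin (k₁ + k₁)) (Fin (k₁ + k₁)) F) :
    sg F k₁ (single (m, n) u) = single (n, m) (dag F k₁ u) := by
  simp [sg]

lemma sg_sg (f : MatCarrier F (k₁ + k₁)) : sg F k₁ (sg F k₁ f) = f := by
  induction f using Finsupp.induction_linear with
  | zero => simp
  | add f g hf hg => simp [hf, hg]
  | single p u => rcases p with ⟨m, n⟩; simp [sg_single, dag_dag]

lemma sg_apply (f : MatCarrier F (k₁ + k₁)) (a b : ℕ) :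
    sg F k₁ f (a, b) = dag F k₁ (f (b, a)) := by
  induction f using Finsupp.induction_linear with
  | zero => simp
  | add f g hf hg => simp [hf, hg]
  | single p u =>
    rcases p with ⟨m, n⟩
    rw [sg_single]
    by_cases h : m = b ∧ n = a
    · rcases h with ⟨rfl, rfl⟩; simp
    · rw [Finsupp.single_eq_of_ne, Finsupp.single_eq_of_ne] <;> simp <;> grind

/-- antisymmetrization `1 - ε σ`. -/
noncomputable def asym (F : Type*) [Field F] (k₁ L : ℕ) :
    MatCarrier F (k₁ + k₁) →ₗ[F] MatCarrier F (k₁ + k₁) :=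
  LinearMap.id - (-1 : F) ^ L • sg F k₁

lemma asym_apply (L : ℕ) (f : MatCarrier F (k₁ + k₁)) :
    asym F k₁ L f = f - (-1 : F) ^ L • sg F k₁ f := by simp [asym]

lemma sg_asym (L : ℕ) (f : MatCarrier F (k₁ + k₁)) :
    sg F k₁ (asym F k₁ L f) = -((-1 : F) ^ L • asym F k₁ L f) := by
  simp only [asym_apply, map_sub, map_smul, sg_sg, smul_sub, smul_smul, eps_sq, one_smul]
  abel

noncomputable def Phi (F : Type*) [Field F] (k₁ L : ℕ) :
    MatCarrier F (k₁ + k₁) →ₗ[F] MatCarrier F (k₁ + k₁) :=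
  (psi F (k₁ + k₁) L).comp (asym F k₁ L)

lemma Phi_apply (L : ℕ) (f : MatCarrier F (k₁ + k₁)) :
    Phi F k₁ L f = psi F (k₁ + k₁) L (asym F k₁ L f) := rfl

lemma Phi_single (L m n : ℕ) (u : Matrix (Fin (k₁ + k₁)) (Fin (k₁ + k₁)) F) :
    Phi F k₁ L (single (m, n) u) = ((n + L).choose L : F) • single (m, n + L) u -
      ((-1 : F) ^ L * ((m + L).choose L : F)) • single (n, m + L) (mDagger F k₁ u) := by
  rw [Phi_apply, asym_apply, sg_single, map_sub, map_smul, psi_single, psi_single, smul_smul]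
  rfl

lemma Rkkl_eq (L : ℕ) : RkklDagger F k₁ (L + 1) = LinearMap.range (Phi F k₁ L) := by
  apply le_antisymm
  · refine Submodule.span_le.2 ?_
    rintro x ⟨u, m, n, rfl⟩
    exact ⟨single (m, n) u, by rw [Phi_single]; rfl⟩
  · rintro _ ⟨f, rfl⟩
    induction f using Finsupp.induction_linear with
    | zero => simp
    | add f g hf hg => rw [map_add]; exact add_mem hf hg
    | single p u =>
      refine Submodule.subset_span ⟨u, p.1, p.2, ?_⟩
      rw [show p = (p.1, p.2) from rfl, Phi_single]; rfl

lemma DL_psi (k L : ℕ) (f : MatCarrier F k) : DL F k (psi F k L f) = psi F k L (DL F k f) := by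
  induction f using Finsupp.induction_linear with
  | zero => simp
  | add f g hf hg => simp [hf, hg]
  | single p u =>
    rcases p with ⟨m, n⟩
    simp only [psi_single, DL_single, map_smul, map_add, smul_add, smul_smul]
    rw [show n + L + 1 = n + 1 + L by ring]
    congr 2
    · ring
    · have := Nat.add_one_mul_choose_eq (n + L) n
      rw [Nat.choose_symm_add,
        show (n + L + 1).choose (n + 1) = (n + 1 + L).choose L by
          rw [show n + L + 1 = (n + 1) + L by ring, Nat.choose_symm_add]] at this
      have h2 : ((n + L + 1 : ℕ) : F) * ((n + L).choose L : F)
          = ((n + 1 + L).choose L : F) * ((n + 1 : ℕ) : F) := by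
        rw [← Nat.cast_mul, ← Nat.cast_mul, this]
      rw [show n + 1 + L = n + L + 1 by ring] at h2 ⊢
      rw [mul_comm, h2, mul_comm]

lemma DL_sg (f : MatCarrier F (k₁ + k₁)) :
    DL F (k₁ + k₁) (sg F k₁ f) = sg F k₁ (DL F (k₁ + k₁) f) := by
  induction f using Finsupp.induction_linear with
  | zero => simp
  | add f g hf hg => simp [hf, hg]
  | single p u =>
    rcases p with ⟨m, n⟩
    simp only [sg_single, DL_single, map_smul, map_add]
    exact add_comm _ _

lemma DL_Phi (L : ℕ) (f : MatCarrier F (k₁ + k₁)) :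
    DL F (k₁ + k₁) (Phi F k₁ L f) = Phi F k₁ L (DL F (k₁ + k₁) f) := by
  simp only [Phi_apply, DL_psi, asym_apply, map_sub, map_smul, DL_sg]

/-- half of the transported product -/
noncomputable def Ah (F : Type*) [Field F] (k L s : ℕ) :
    MatCarrier F k →ₗ[F] MatCarrier F k →ₗ[F] MatCarrier F k :=
  bil fun p q =>
    if s ≤ p.1 + p.2 + q.1 + L then
      ((-1 : F) ^ (p.2 + L) * ((p.2 + L).choose L : F) *
        ((q.1 + p.2 + L).choose (p.2 + L) : F) *
        ((p.1 + p.2 + q.1 + L - s).choose p.1 : F)) •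
        mmul F k (p.1 + p.2 + q.1 + L - s, q.2)
     else 0

lemma Ah_single (k L s a b c d : ℕ) (u v : Matrix (Fin k) (Fin k) F) :
    Ah F k L s (single (a, b) u) (single (c, d) v) =
     if s ≤ a + b + c + L then
      ((-1 : F) ^ (b + L) * ((b + L).choose L : F) *
        ((c + b + L).choose (b + L) : F) *
        ((a + b + c + L - s).choose a : F)) • single (a + b + c + L - s, d) (u * v)
     else 0 := by
  rw [Ah, bil_single]
  split_ifs <;> simp [mmul_apply]

lemma prodL_single (k s a b c d : ℕ) (u v : Matrix (Fin k) (Fin k) F) :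
    prodL F k s (single (a, b) u) (single (c, d) v) =
    (if s ≤ a + b + c then
      ((-1 : F) ^ b * ((c + b).choose b : F) * ((a + b + c - s).choose a : F)) •
        single (a + b + c - s, d) (u * v)
     else 0) -
    (if s ≤ a + b + d then
      ((-1 : F) ^ a * ((d + a).choose a : F) * ((a + b + d - s).choose b : F)) •
        single (c, a + b + d - s) (v * u)
     else 0) := by
  rw [prodL, bil_single]
  split_ifs <;> simp [mmul_apply, sub_eq_add_neg]

lemma choose_id1 (b L M : ℕ) :
    (b + L).choose L * (M + L).choose (b + L) = (M + L).choose L * M.choose b := by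
  by_cases h : b ≤ M
  · have := Nat.choose_mul (n := M + L) (k := b + L) (s := L) (by omega)
    simp only [Nat.add_sub_cancel] at this
    rw [← this, mul_comm]
  · rw [Nat.choose_eq_zero_of_lt (by omega : M + L < b + L),
      Nat.choose_eq_zero_of_lt (by omega : M < b)]
    simp

lemma choose_id2 (d L a : ℕ) :
    (d + L).choose L * (d + L + a).choose a = (d + a + L).choose (a + L) * (a + L).choose L := by
  have h := choose_id1 a L (d + a)
  have h1 := choose_id1 d L (d + a)
  have h2 : (d + L + a).choose a = (d + a + L).choose (d + L) := by
    rw [show d + a + L = d + L + a by ring, Nat.choose_symm_add]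
  rw [h2, h1, mul_comm ((d + a + L).choose (a + L)), h, Nat.choose_symm_add]

lemma prodL_psi (L s : ℕ) (P Q : MatCarrier F (k₁ + k₁)) :
    prodL F (k₁ + k₁) s (psi F (k₁ + k₁) L P) (psi F (k₁ + k₁) L Q) =
      psi F (k₁ + k₁) L (Ah F (k₁ + k₁) L s P Q -
        (-1 : F) ^ L • sg F k₁ (Ah F (k₁ + k₁) L s (sg F k₁ P) (sg F k₁ Q))) := by
  induction P using Finsupp.induction_linear with
  | zero => simp
  | add f g hf hg => simp only [map_add, LinearMap.add_apply, hf, hg, map_sub, smul_add]; abel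
  | single p u =>
  induction Q using Finsupp.induction_linear with
  | zero => simp
  | add f g hf hg => simp only [map_add, hf, hg, map_sub, smul_add]; abel
  | single q v =>
  rcases p with ⟨a, b⟩
  rcases q with ⟨c, d⟩
  simp only [psi_single, sg_single, map_smul, LinearMap.smul_apply, prodL_single, Ah_single,
    map_sub, smul_sub]
  congr 1
  · by_cases h : s ≤ a + b + c + L
    · rw [if_pos (by omega), if_pos h]
      simp only [map_smul, psi_single, smul_smul]
      rw [show a + (b + L) + c - s = a + b + c + L - s by omega,
        show c + (b + L) = c + b + L by omega]
      congr 1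
      ring
    · rw [if_neg (by omega), if_neg h]; simp
  · by_cases h : s ≤ b + a + d + L
    · rw [if_pos (by omega), if_pos h]
      simp only [map_smul, psi_single, smul_smul, sg_single, dag_mul, dag_dag]
      rw [show a + (b + L) + (d + L) - s = (b + a + d + L - s) + L by omega]
      congr 1
      generalize b + a + d + L - s = M
      have e1 : ((b + L).choose L : F) * ((M + L).choose (b + L) : F)
        = ((M + L).choose L : F) * (M.choose b : F) := by
        rw [← Nat.cast_mul, ← Nat.cast_mul, choose_id1 b L M]
      have e2 : ((d + L).choose L : F) * ((d + L + a).choose a : F)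
        = ((d + a + L).choose (a + L) : F) * ((a + L).choose L : F) := by
        rw [← Nat.cast_mul, ← Nat.cast_mul, choose_id2 d L a]
      have e3 : (-1 : F) ^ L * (-1 : F) ^ (a + L) = (-1) ^ a := by
        rw [pow_add, mul_left_comm, eps_sq, mul_one]
      rw [← e3]
      linear_combination ((-1 : F) ^ L * (-1 : F) ^ (a + L)) *
        ((d + L).choose L : F) * ((d + L + a).choose a : F) * e1 +
        ((-1 : F) ^ L * (-1 : F) ^ (a + L)) * ((M + L).choose L : F) * (M.choose b : F) * e2
    · rw [if_neg h]
      by_cases h2 : s ≤ a + (b + L) + (d + L)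
      · rw [if_pos h2, Nat.choose_eq_zero_of_lt (by omega : a + (b + L) + (d + L) - s < b + L)]
        simp
      · rw [if_neg h2]; simp

lemma prodL_Phi (L s : ℕ) (p q : MatCarrier F (k₁ + k₁)) :
    prodL F (k₁ + k₁) s (Phi F k₁ L p) (Phi F k₁ L q) =
      Phi F k₁ L (Ah F (k₁ + k₁) L s (asym F k₁ L p) (asym F k₁ L q)) := by
  rw [Phi_apply, Phi_apply, prodL_psi, sg_asym, sg_asym, Phi_apply, asym_apply L (Ah _ _ _ _ _ _)]
  simp only [map_neg, LinearMap.neg_apply, neg_neg, map_smul, LinearMap.smul_apply, smul_smul,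
    eps_sq, one_smul, smul_neg]

/-- extraction of the coefficient of `X^N`, multiplied by `u X^m` -/
noncomputable def Tm {k : ℕ} (u : Matrix (Fin k) (Fin k) F) (N m : ℕ) :
    MatCarrier F k →ₗ[F] MatCarrier F k :=
  Finsupp.lsum F fun q => if q.1 = N then
    (Finsupp.lsingle (m, q.2)).comp (LinearMap.mulLeft F u) else 0

lemma Tm_single {k : ℕ} (u v : Matrix (Fin k) (Fin k) F) (N m a b : ℕ) :
    Tm u N m (single (a, b) v) = if a = N then single (m, b) (u * v) else 0 := by
  rw [Tm]
  split_ifs with h <;> simp [h]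

lemma Tm_apply {k : ℕ} (u : Matrix (Fin k) (Fin k) F) (N m : ℕ) (Q : MatCarrier F k) (a b : ℕ) :
    Tm u N m Q (a, b) = if a = m then u * Q (N, b) else 0 := by
  induction Q using Finsupp.induction_linear with
  | zero => simp
  | add f g hf hg => simp only [map_add, Finsupp.add_apply, hf, hg]; split_ifs <;> simp [mul_add]
  | single p v =>
    rcases p with ⟨c, d⟩
    rw [Tm_single]
    simp only [Finsupp.single_apply, Prod.mk.injEq]
    by_cases h1 : c = N
    · rw [if_pos h1, Finsupp.single_apply]
      simp only [Prod.mk.injEq, h1, true_and]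
      by_cases h2 : a = m <;> by_cases h3 : d = b
      · simp [h2, h3]
      · simp [h2, h3]
      · rw [if_neg (by omega), if_neg h2]
      · rw [if_neg (by omega), if_neg h2]
    · simp [h1]

lemma Ah_top (L N m : ℕ) (u : Matrix (Fin (k₁ + k₁)) (Fin (k₁ + k₁)) F)
    (Q : MatCarrier F (k₁ + k₁)) (hQ : ∀ a b, N < a → Q (a, b) = 0) :
    Ah F (k₁ + k₁) L (N + (m + 1) + L) (asym F k₁ L (single (m, m + 1) u)) Q =
     ((-1 : F) ^ (m + 1 + L) * ((m + 1 + L).choose L : F) *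
        ((N + (m + 1) + L).choose (m + 1 + L) : F)) • Tm u N m Q := by
  rw [← Finsupp.sum_single Q]
  simp only [Finsupp.sum, map_sum, Finset.smul_sum]
  refine Finset.sum_congr rfl fun q hq => ?_
  rcases q with ⟨c, d⟩
  have hc : c ≤ N := by
    by_contra h
    exact (Finsupp.mem_support_iff.1 hq) (hQ c d (by omega))
  rw [asym_apply, sg_single, map_sub, map_smul, LinearMap.sub_apply, LinearMap.smul_apply,
    Ah_single, Ah_single, Tm_single]
  have h2 : (m + 1 + m + c + L - (N + (m + 1) + L)).choose (m + 1) = 0 :=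
    Nat.choose_eq_zero_of_lt (by omega)
  rw [h2]
  by_cases h : c = N
  · subst h
    rw [if_pos (by omega), if_pos rfl]
    rw [show m + (m + 1) + c + L - (c + (m + 1) + L) = m by omega]
    simp
  · rw [if_neg h]
    split_ifs with h3 h4
    · rw [Nat.choose_eq_zero_of_lt
        (by omega : m + (m + 1) + c + L - (N + (m + 1) + L) < m)]
      simp
    · rw [Nat.choose_eq_zero_of_lt
        (by omega : m + (m + 1) + c + L - (N + (m + 1) + L) < m)]
      simp
    · simp
    · simp

lemma top_coef_ne [CharZero F] (L N m : ℕ) : ((-1 : F) ^ (m + 1 + L) *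
    ((m + 1 + L).choose L : F) * ((N + (m + 1) + L).choose (m + 1 + L) : F)) ≠ 0 := by
  refine mul_ne_zero (mul_ne_zero (by simp) ?_) ?_
  · exact_mod_cast (Nat.choose_pos (by omega)).ne'
  · exact_mod_cast (Nat.choose_pos (by omega)).ne'

lemma psi_apply (k L : ℕ) (f : MatCarrier F k) (a b : ℕ) :
    psi F k L f (a, b + L) = ((b + L).choose L : F) • f (a, b) := by
  induction f using Finsupp.induction_linear with
  | zero => simp
  | add f g hf hg => simp only [map_add, Finsupp.add_apply, hf, hg, smul_add]
  | single p v =>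
    rcases p with ⟨c, d⟩
    rw [psi_single]
    by_cases h : c = a ∧ d = b
    · rcases h with ⟨rfl, rfl⟩; simp
    · simp only [Finsupp.smul_apply, Finsupp.single_apply, Prod.mk.injEq, Nat.add_right_cancel_iff,
        if_neg h, smul_zero]

lemma psi_apply_lt (k L : ℕ) (f : MatCarrier F k) (a b : ℕ) (hb : b < L) :
    psi F k L f (a, b) = 0 := by
  induction f using Finsupp.induction_linear with
  | zero => simp
  | add f g hf hg => simp only [map_add, Finsupp.add_apply, hf, hg, add_zero]
  | single p v =>
    rcases p with ⟨c, d⟩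
    rw [psi_single, Finsupp.smul_apply, Finsupp.single_apply, if_neg, smul_zero]
    simp; omega

lemma mWeight_apply (k n : ℕ) (f : MatCarrier F k) (hf : f ∈ mWeight F k n) (a b : ℕ)
    (h : a + b + 1 ≠ n) : f (a, b) = 0 := by
  unfold mWeight at hf
  induction hf using Submodule.span_induction with
  | mem x hx =>
    rcases hx with ⟨u, m₁, m₂, h', rfl⟩
    rw [Finsupp.single_apply, if_neg]
    simp; omega
  | zero => simp
  | add x y _ _ hx hy => simp [hx, hy]
  | smul c x _ hx => simp [hx]

lemma asym_single_good (L : ℕ) (a : Matrix (Fin (k₁ + k₁)) (Fin (k₁ + k₁)) F)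
    (ha : dag F k₁ a = -((-1 : F) ^ L • a)) :
    asym F k₁ L (single (0, 0) a) = single (0, 0) ((2 : F) • a) := by
  rw [asym_apply, sg_single, ha, Finsupp.smul_single, ← Finsupp.single_sub, smul_neg, smul_smul,
    eps_sq, two_smul, one_smul, sub_neg_eq_add]

lemma Phi_single_good (L : ℕ) (a : Matrix (Fin (k₁ + k₁)) (Fin (k₁ + k₁)) F)
    (ha : dag F k₁ a = -((-1 : F) ^ L • a)) :
    Phi F k₁ L (single (0, 0) a) = single (0, L) ((2 : F) • a) := by
  rw [Phi_apply, asym_single_good L a ha, psi_single]; simp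

/-- `K = Φ⁻¹(I)` -/
lemma simple_aux [CharZero F] (L : ℕ) (K : Submodule F (MatCarrier F (k₁ + k₁)))
    (hD : ∀ f ∈ K, DL F (k₁ + k₁) f ∈ K)
    (hT : ∀ f ∈ K, ∀ N, (∀ a b, N < a → asym F k₁ L f (a, b) = 0) → ∀ u m,
      Tm u N m (asym F k₁ L f) ∈ K)
    (w : MatCarrier F (k₁ + k₁)) (hw : w ∈ K) (hw0 : asym F k₁ L w ≠ 0) : K = ⊤ := by
  -- step 1
  obtain ⟨c, hc0, hc⟩ : ∃ c : Matrix (Fin (k₁ + k₁)) (Fin (k₁ + k₁)) F, c ≠ 0 ∧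
      ∀ v, single (0, 0) (v * c) ∈ K := by
    set Q := asym F k₁ L w with hQ
    obtain ⟨x, hx, hmax⟩ := Finset.exists_max_image Q.support (fun p => p.1)
      (Finsupp.support_nonempty_iff.2 hw0)
    obtain ⟨N, b0⟩ := x
    have hN : ∀ a b, N < a → Q (a, b) = 0 := by
      intro a b hab
      by_contra h
      have := hmax (a, b) (Finsupp.mem_support_iff.2 h)
      simp at this; omega
    obtain ⟨y, hy, hmax2⟩ := Finset.exists_max_image (Q.support.filter (fun p => p.1 = N))
      (fun p => p.2) ⟨(N, b0), by simpa using hx⟩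
    obtain ⟨N1, N'⟩ := y
    simp only [Finset.mem_filter, Finsupp.mem_support_iff] at hy hmax2
    obtain ⟨hy, rfl⟩ := hy
    have hN' : ∀ b, N' < b → Q (N1, b) = 0 := by
      intro b hb
      by_contra h
      have := hmax2 (N1, b) ⟨h, rfl⟩
      simp at this; omega
    by_cases h0 : N' = 0
    · subst h0
      refine ⟨Q (N1, 0), hy, fun v => ?_⟩
      have := hT w hw N1 hN v 0
      convert this using 1
      ext1 ⟨a, b⟩
      rw [Tm_apply, Finsupp.single_apply]
      by_cases ha : a = 0
      · by_cases hb : b = 0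
        · simp [ha, hb, hQ]
        · have h5 := hN' b (by omega)
          rw [hQ] at h5
          rw [if_neg (by simp; omega), h5]; simp
      · rw [if_neg (by simp; omega), if_neg ha]
    · have hw' := hT w hw N1 hN 1 0
      rw [← hQ] at hw'
      set w' := Tm 1 N1 0 Q with hw'd
      have hv : ∀ a b, asym F k₁ L w' (a, b) = (if a = 0 then Q (N1, b) else 0) -
          (-1 : F) ^ L • (if b = 0 then dag F k₁ (Q (N1, a)) else 0) := by
        intro a b
        rw [asym_apply, Finsupp.sub_apply, Finsupp.smul_apply, sg_apply, hw'd, Tm_apply, Tm_apply]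
        split_ifs <;> simp
      refine ⟨dag F k₁ (Q (N1, N')), fun h => hy ?_, fun v => ?_⟩
      · rw [← dag_dag (Q (N1, N')), h, map_zero]
      have := hT w' hw' N' (fun a b hab => by
        rw [hv, if_neg (by omega), hN' a hab]; simp) (-((-1 : F) ^ L • v)) 0
      convert this using 1
      ext1 ⟨a, b⟩
      rw [Tm_apply, Finsupp.single_apply, hv, if_neg h0]
      by_cases ha : a = 0
      · by_cases hb : b = 0
        · simp [ha, hb, smul_smul, eps_sq]
        · rw [if_neg (by simp; omega)]; simp [hb]
      · rw [if_neg (by simp; omega), if_neg ha]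
  -- step 2
  have key0 : ∀ a, single (0, 0) a ∈ K → ∀ u m,
      single (m, 0) (u * (a - (-1 : F) ^ L • dag F k₁ a)) ∈ K := by
    intro a ha u m
    have e : asym F k₁ L (single (0, 0) a) = single (0, 0) (a - (-1 : F) ^ L • dag F k₁ a) := by
      rw [asym_apply, sg_single, Finsupp.smul_single, ← Finsupp.single_sub]
    have := hT _ ha 0 (fun a' b h => by
      rw [e, Finsupp.single_apply, if_neg (by simp; omega)]) u m
    rwa [e, Tm_single, if_pos rfl] at this
  have hall : ∀ a, single (0, 0) a ∈ K := by
    intro a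
    refine top_of_sandwich (K.comap (Finsupp.lsingle (0, 0))) (dag F k₁ c) (fun h => hc0 ?_) ?_ a
    · rw [← dag_dag c, h, map_zero]
    intro u v
    have h1 := key0 _ (hc (dag F k₁ v)) u 0
    have h2 := hc (u * dag F k₁ v)
    have h3 := K.smul_mem ((-1 : F) ^ L) (K.sub_mem h2 h1)
    rw [← Finsupp.single_sub, Finsupp.smul_single] at h3
    change single (0, 0) (u * dag F k₁ c * v) ∈ K
    have h4 : (-1 : F) ^ L • (u * dag F k₁ v * c -
        u * (dag F k₁ v * c - (-1 : F) ^ L • dag F k₁ (dag F k₁ v * c))) = u * dag F k₁ c * v := by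
      rw [dag_mul, dag_dag, mul_sub, ← mul_assoc, sub_sub_cancel, Matrix.mul_smul, smul_smul, eps_sq,
        one_smul, mul_assoc]
    rwa [h4] at h3
  -- step 3
  obtain ⟨a, b, ha, hba⟩ := exists_good (F := F) (k₁ := k₁) L
  have hm : ∀ n m v, single (m, n) v ∈ K := by
    intro n
    induction n with
    | zero =>
      intro m v
      have := key0 a (hall a) ((2 : F)⁻¹ • (v * b)) m
      convert this using 2
      rw [ha, smul_neg, smul_smul, eps_sq, one_smul, sub_neg_eq_add, ← two_smul F a,
        Matrix.mul_smul, Matrix.smul_mul, smul_smul, mul_assoc, hba]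
      simp
    | succ n ih =>
      intro m v
      have h1 := hD _ (ih m v)
      rw [DL_single] at h1
      have h2 := (K.add_mem_iff_right (K.smul_mem _ (ih (m + 1) v))).1 h1
      exact (K.smul_mem_iff (by exact_mod_cast Nat.succ_ne_zero n)).1 h2
  rw [eq_top_iff]
  rintro f -
  induction f using Finsupp.induction_linear with
  | zero => simp
  | add f g hf hg => exact add_mem hf hg
  | single p u => exact hm p.2 p.1 u

lemma htop (L : ℕ) (w : MatCarrier F (k₁ + k₁)) (N : ℕ)
    (hN : ∀ a b, N < a → asym F k₁ L w (a, b) = 0)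
    (u : Matrix (Fin (k₁ + k₁)) (Fin (k₁ + k₁)) F) (m : ℕ) :
    mProd F (k₁ + k₁) (N + (m + 1) + L) (Phi F k₁ L (single (m, m + 1) u)) (Phi F k₁ L w) =
       ((-1 : F) ^ (m + 1 + L) * ((m + 1 + L).choose L : F) *
        ((N + (m + 1) + L).choose (m + 1 + L) : F)) • Phi F k₁ L (Tm u N m (asym F k₁ L w)) := by
  rw [mProd_eq, prodL_Phi, Ah_top L N m u _ hN, map_smul]

lemma good_ne [CharZero F] (hk₁ : 1 ≤ k₁) (a b : Matrix (Fin (k₁ + k₁)) (Fin (k₁ + k₁)) F)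
    (hba : b * a = 1) : (2 : F) • a ≠ 0 := by
  refine smul_ne_zero two_ne_zero ?_
  rintro rfl
  have : Nonempty (Fin (k₁ + k₁)) := ⟨⟨0, by omega⟩⟩
  rw [mul_zero] at hba
  exact zero_ne_one hba

lemma Phi_good_ne (L : ℕ) (a : Matrix (Fin (k₁ + k₁)) (Fin (k₁ + k₁)) F)
    (ha : dag F k₁ a = -((-1 : F) ^ L • a)) (ha0 : (2 : F) • a ≠ 0) :
    Phi F k₁ L (single (0, 0) a) ≠ 0 := by
  rw [Phi_single_good L a ha]
  exact fun h => ha0 (Finsupp.single_eq_zero.1 h)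

lemma prod_ne [CharZero F] (L : ℕ) (a : Matrix (Fin (k₁ + k₁)) (Fin (k₁ + k₁)) F)
    (ha : dag F k₁ a = -((-1 : F) ^ L • a)) (ha0 : (2 : F) • a ≠ 0) :
    mProd F (k₁ + k₁) (0 + (0 + 1) + L) (Phi F k₁ L (single (0, 0 + 1) ((2 : F)⁻¹ • 1)))
      (Phi F k₁ L (single (0, 0) a)) ≠ 0 := by
  have hN : ∀ a' b', 0 < a' → asym F k₁ L (single (0, 0) a) (a', b') = 0 := by
    intro a' b' h
    rw [asym_single_good L a ha, Finsupp.single_apply, if_neg (by simp; omega)]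
  rw [htop L _ 0 hN]
  refine smul_ne_zero (top_coef_ne L 0 0) ?_
  rw [asym_single_good L a ha, Tm_single, if_pos rfl, smul_mul_smul_comm, one_mul,
    inv_mul_cancel₀ two_ne_zero, one_smul]
  exact Phi_good_ne L a ha ha0

lemma ideal_eq [CharZero F] (L : ℕ) (I : Submodule F (MatCarrier F (k₁ + k₁)))
    (hI : I ≤ LinearMap.range (Phi F k₁ L))
    (hID : ∀ x ∈ I, mD F (k₁ + k₁) x ∈ I)
    (hIP : ∀ u ∈ LinearMap.range (Phi F k₁ L), ∀ w ∈ I, ∀ s : ℕ, mProd F (k₁ + k₁) s u w ∈ I) :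
    I = ⊥ ∨ I = LinearMap.range (Phi F k₁ L) := by
  by_cases hbot : I = ⊥
  · exact Or.inl hbot
  right
  obtain ⟨x, hx, hx0⟩ := (Submodule.ne_bot_iff I).1 hbot
  obtain ⟨w, rfl⟩ := hI hx
  have hK := simple_aux L (I.comap (Phi F k₁ L)) (fun f hf => by
      rw [Submodule.mem_comap] at hf ⊢
      have := hID _ hf
      rwa [mD_eq, DL_Phi] at this) (fun f hf N hN u m => by
      rw [Submodule.mem_comap] at hf ⊢
      have := hIP _ (LinearMap.mem_range_self _ (single (m, m + 1) u)) _ hf (N + (m + 1) + L)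
      rw [htop L f N hN] at this
      exact (I.smul_mem_iff (top_coef_ne L N m)).1 this) w (Submodule.mem_comap.2 hx)
        (fun h => hx0 (by rw [Phi_apply, h, map_zero]))
  refine le_antisymm hI ?_
  rintro _ ⟨f, rfl⟩
  have : f ∈ I.comap (Phi F k₁ L) := by rw [hK]; exact Submodule.mem_top
  exact Submodule.mem_comap.1 this

lemma weight_lt (L n : ℕ) (hn : n < L + 1) :
    LinearMap.range (Phi F k₁ L) ⊓ mWeight F (k₁ + k₁) n = ⊥ := by
  rw [Submodule.eq_bot_iff]
  rintro x ⟨hx1, hx⟩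
  obtain ⟨f, rfl⟩ := hx1
  ext1 ⟨p, q⟩
  by_cases h : p + q + 1 = n
  · rw [Phi_apply, psi_apply_lt _ _ _ _ _ (by omega), Finsupp.zero_apply]
  · rw [mWeight_apply _ _ _ hx _ _ h, Finsupp.zero_apply]

lemma weight_eq (L : ℕ) (a : Matrix (Fin (k₁ + k₁)) (Fin (k₁ + k₁)) F)
    (ha : dag F k₁ a = -((-1 : F) ^ L • a)) (ha0 : (2 : F) • a ≠ 0) :
    LinearMap.range (Phi F k₁ L) ⊓ mWeight F (k₁ + k₁) (L + 1) ≠ ⊥ := by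
  rw [Submodule.ne_bot_iff]
  refine ⟨Phi F k₁ L (single (0, 0) a), Submodule.mem_inf.2 ⟨LinearMap.mem_range_self _ _, ?_⟩,
    Phi_good_ne L a ha ha0⟩
  rw [Phi_single_good L a ha]
  exact Submodule.subset_span ⟨_, 0, L, by omega, rfl⟩

end RkAux

open RkAux Finsupp

/-- **Theorem 4.1** (for `R†_{k×k,ℓ}`, `k = 2k₁` even): for every `ℓ ≥ 1`,
`R†_{k×k,ℓ}` is a conformal subalgebra of `R_{k×k}` (closed under `∂` and all
`n`-th products), it is a simple conformal algebra in its own right, and its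
minimal weight is `ℓ`. -/
theorem RkklDagger_simple_subalgebra (F : Type*) [Field F] [CharZero F]
    (k₁ ℓ : ℕ) (hk₁ : 1 ≤ k₁) (hℓ : 1 ≤ ℓ) :
    -- conformal subalgebra: closed under ∂ and under all n-th products
    (∀ x ∈ RkklDagger F k₁ ℓ, mD F (k₁ + k₁) x ∈ RkklDagger F k₁ ℓ) ∧
    (∀ f ∈ RkklDagger F k₁ ℓ, ∀ g ∈ RkklDagger F k₁ ℓ, ∀ s : ℕ,
      mProd F (k₁ + k₁) s f g ∈ RkklDagger F k₁ ℓ) ∧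
    -- simple: nonzero products and no nontrivial ideals
    (∃ f ∈ RkklDagger F k₁ ℓ, ∃ g ∈ RkklDagger F k₁ ℓ, ∃ s : ℕ,
      mProd F (k₁ + k₁) s f g ≠ 0) ∧
    (∀ I : Submodule F (MatCarrier F (k₁ + k₁)), I ≤ RkklDagger F k₁ ℓ →
      (∀ x ∈ I, mD F (k₁ + k₁) x ∈ I) →
      (∀ u ∈ RkklDagger F k₁ ℓ, ∀ w ∈ I, ∀ s : ℕ, mProd F (k₁ + k₁) s u w ∈ I) →
      I = ⊥ ∨ I = RkklDagger F k₁ ℓ) ∧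
    -- minimal weight ℓ
    (∀ n < ℓ, RkklDagger F k₁ ℓ ⊓ mWeight F (k₁ + k₁) n = ⊥) ∧
    (RkklDagger F k₁ ℓ ⊓ mWeight F (k₁ + k₁) ℓ ≠ ⊥) := by
  obtain ⟨L, rfl⟩ : ∃ L, ℓ = L + 1 := ⟨ℓ - 1, by omega⟩
  rw [Rkkl_eq]
  obtain ⟨a, b, ha, hba⟩ := exists_good (F := F) (k₁ := k₁) L
  have ha0 := good_ne hk₁ a b hba
  refine ⟨?_, ?_, ?_, ideal_eq L, weight_lt L, weight_eq L a ha ha0⟩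
  · rintro _ ⟨f, rfl⟩
    rw [mD_eq, DL_Phi]
    exact LinearMap.mem_range_self _ _
  · rintro _ ⟨f, rfl⟩ _ ⟨g, rfl⟩ s
    rw [mProd_eq, prodL_Phi]
    exact LinearMap.mem_range_self _ _
  · exact ⟨_, LinearMap.mem_range_self _ _, _, LinearMap.mem_range_self _ _, _,
      prod_ne L a ha ha0⟩
end

section
/- Let k = 2k₁ ≥ 4 be even. For every ℓ ≥ 2, the conformal algebra R†_{k×k,ℓ} is generated by its subspace of minimal weight ℓ, namely by X^{(ℓ)} = R†_{k×k,ℓ} ∩ span{u(m₁,m₂) : u ∈ A, m₁+m₂+1 = ℓ}: R†_{k×k,ℓ} equals the span of all iterated products u¹⁽ⁿ¹⁾(u²⁽ⁿ²⁾(⋯(uˢ⁽ⁿˢ⁾v)⋯)) with s ∈ ℕ, u¹,…,uˢ, v ∈ X^{(ℓ)}, and n₁,…,nₛ ∈ ℕ. -/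
/-- Iterated products `u¹⁽ⁿ¹⁾(u²⁽ⁿ²⁾(⋯(uˢ⁽ⁿˢ⁾v)⋯))` with all `uⁱ, v` in `S`
(the case `s = 0` being `v` itself). -/
inductive IterProd {R : Type*} (P : ℕ → R → R → R) (S : Set R) : R → Prop
  | base : ∀ v ∈ S, IterProd P S v
  | step : ∀ u ∈ S, ∀ (n : ℕ) (w : R), IterProd P S w → IterProd P S (P n u w)


section Helpers

open Matrix

variable {F : Type*} [Field F]

/-! ### Properties of the dagger -/

lemma mDagger_add (k₁ : ℕ) (u v : Matrix (Fin (k₁ + k₁)) (Fin (k₁ + k₁)) F) :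
    mDagger F k₁ (u + v) = mDagger F k₁ u + mDagger F k₁ v := by
  simp only [mDagger, Matrix.transpose_add, Matrix.mul_add, Matrix.add_mul]

lemma mDagger_smul (k₁ : ℕ) (c : F) (u : Matrix (Fin (k₁ + k₁)) (Fin (k₁ + k₁)) F) :
    mDagger F k₁ (c • u) = c • mDagger F k₁ u := by
  simp only [mDagger, Matrix.transpose_smul, Matrix.mul_smul, Matrix.smul_mul]

/-- The matrix `[[0,-I],[I,0]]`. -/
noncomputable def dJ (F : Type*) [Field F] (k₁ : ℕ) :
    Matrix (Fin (k₁ + k₁)) (Fin (k₁ + k₁)) F :=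
  Matrix.reindex finSumFinEquiv finSumFinEquiv
      (Matrix.fromBlocks (0 : Matrix (Fin k₁) (Fin k₁) F) (-1) 1 0)

lemma mDagger_eq (k₁ : ℕ) (u : Matrix (Fin (k₁ + k₁)) (Fin (k₁ + k₁)) F) :
    mDagger F k₁ u = - (dJ F k₁ * u.transpose * dJ F k₁) := by
  have h : (Matrix.reindex finSumFinEquiv finSumFinEquiv
      (Matrix.fromBlocks (0 : Matrix (Fin k₁) (Fin k₁) F) 1 (-1) 0)) = - dJ F k₁ := by
    have : (Matrix.fromBlocks 0 1 (-1) 0 : Matrix (Fin k₁ ⊕ Fin k₁) (Fin k₁ ⊕ Fin k₁) F) =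
      - (Matrix.fromBlocks 0 (-1) 1 0 : Matrix (Fin k₁ ⊕ Fin k₁) (Fin k₁ ⊕ Fin k₁) F) := by
      rw [Matrix.fromBlocks_neg]; simp
    rw [this]; rfl
  rw [mDagger, h, Matrix.mul_neg]; rfl

lemma dJ_sq (k₁ : ℕ) : dJ F k₁ * dJ F k₁ = -1 := by
  simp only [dJ, Matrix.reindex_apply, Matrix.submatrix_mul_equiv, Matrix.fromBlocks_multiply]
  have : (Matrix.fromBlocks (-1) 0 0 (-1) : Matrix (Fin k₁ ⊕ Fin k₁) (Fin k₁ ⊕ Fin k₁) F)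
      = -1 := by
    rw [← Matrix.fromBlocks_one, Matrix.fromBlocks_neg]; simp
  have h2 : ((-1 : Matrix (Fin k₁ ⊕ Fin k₁) (Fin k₁ ⊕ Fin k₁) F)).submatrix
      (finSumFinEquiv (m := k₁) (n := k₁)).symm (finSumFinEquiv (m := k₁) (n := k₁)).symm = -1 := by
    have := Matrix.submatrix_one_equiv (α := F) (finSumFinEquiv (m := k₁) (n := k₁)).symm
    rw [← this]; rfl
  simpa [this] using h2

lemma dJ_transpose (k₁ : ℕ) : (dJ F k₁).transpose = - dJ F k₁ := by
  have : (Matrix.fromBlocks 0 (-1) 1 0 : Matrix (Fin k₁ ⊕ Fin k₁) (Fin k₁ ⊕ Fin k₁) F).transpose =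
      - (Matrix.fromBlocks 0 (-1) 1 0 : Matrix (Fin k₁ ⊕ Fin k₁) (Fin k₁ ⊕ Fin k₁) F) := by
    rw [Matrix.fromBlocks_neg, Matrix.fromBlocks_transpose]; simp
  rw [dJ, Matrix.transpose_reindex, this]; rfl

lemma mDagger_mul (k₁ : ℕ) (u v : Matrix (Fin (k₁ + k₁)) (Fin (k₁ + k₁)) F) :
    mDagger F k₁ (u * v) = mDagger F k₁ v * mDagger F k₁ u := by
  simp only [mDagger_eq, Matrix.transpose_mul, neg_mul_neg]
  have : dJ F k₁ * v.transpose * dJ F k₁ * (dJ F k₁ * u.transpose * dJ F k₁)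
    = dJ F k₁ * v.transpose * (dJ F k₁ * dJ F k₁) * u.transpose * dJ F k₁ := by
    simp only [Matrix.mul_assoc]
  rw [this, dJ_sq]
  simp [Matrix.mul_assoc]

lemma mDagger_mDagger (k₁ : ℕ) (u : Matrix (Fin (k₁ + k₁)) (Fin (k₁ + k₁)) F) :
    mDagger F k₁ (mDagger F k₁ u) = u := by
  simp only [mDagger_eq, Matrix.transpose_mul, Matrix.transpose_neg, dJ_transpose,
    Matrix.transpose_transpose]
  have : dJ F k₁ * -(-dJ F k₁ * (u * -dJ F k₁)) * dJ F k₁ =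
    -((dJ F k₁ * dJ F k₁) * u * (dJ F k₁ * dJ F k₁)) := by
    simp [Matrix.mul_assoc]
  rw [this, dJ_sq]
  simp

/-- Diagonal matrix with the two halves of the diagonal given separately. -/
noncomputable def dD {k₁ : ℕ} (d e : Fin k₁ → F) :
    Matrix (Fin (k₁ + k₁)) (Fin (k₁ + k₁)) F :=
  Matrix.diagonal (fun i => Sum.elim d e (finSumFinEquiv.symm i))

lemma dD_dagger {k₁ : ℕ} (d e : Fin k₁ → F) : mDagger F k₁ (dD d e) = dD e d := by
  have h : ∀ d e : Fin k₁ → F, dD d e = Matrix.reindex finSumFinEquiv finSumFinEquiv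
      (Matrix.fromBlocks (Matrix.diagonal d) 0 0 (Matrix.diagonal e)) := by
    intro d e
    rw [Matrix.fromBlocks_diagonal, Matrix.reindex_apply, Matrix.submatrix_diagonal_equiv]
    rfl
  rw [mDagger_eq, h, h]
  simp only [dJ, Matrix.transpose_reindex]
  simp only [Matrix.reindex_apply, Matrix.submatrix_mul_equiv,
    Matrix.fromBlocks_transpose, Matrix.fromBlocks_multiply]
  ext i j
  simp only [Matrix.neg_apply, Matrix.submatrix_apply]
  rw [← Matrix.neg_apply, Matrix.fromBlocks_neg]
  simp

/-- The block of an index. -/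
def blk {k₁ : ℕ} (i : Fin (k₁ + k₁)) : Fin k₁ := Sum.elim id id (finSumFinEquiv.symm i)

/-- The projection on the `p`-th two-dimensional block. -/
noncomputable def dE (F : Type*) [Field F] {k₁ : ℕ} (p : Fin k₁) :
    Matrix (Fin (k₁ + k₁)) (Fin (k₁ + k₁)) F :=
  dD (Pi.single p 1) (Pi.single p 1)

lemma dE_eq {k₁ : ℕ} (p : Fin k₁) :
    dE F p = Matrix.diagonal (fun i => if blk i = p then 1 else 0) := by
  unfold dE dD
  congr 1
  funext i
  unfold blk
  rcases finSumFinEquiv.symm i with j | j <;> simp [Pi.single_apply] <;> congr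

lemma dE_dagger {k₁ : ℕ} (p : Fin k₁) : mDagger F k₁ (dE F p) = dE F p := dD_dagger _ _

lemma dE_mul_ne {k₁ : ℕ} {p q : Fin k₁} (h : p ≠ q) : dE F p * dE F q = 0 := by
  rw [dE_eq, dE_eq, Matrix.diagonal_mul_diagonal]
  rw [← Matrix.diagonal_zero]
  congr 1
  funext i
  by_cases h1 : blk i = p <;> simp [h1, h]

lemma dE_sq {k₁ : ℕ} (p : Fin k₁) : dE F p * dE F p = dE F p := by
  rw [dE_eq, Matrix.diagonal_mul_diagonal]
  congr 1
  funext i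
  simp

lemma dE_mul_single {k₁ : ℕ} (p : Fin k₁) (a b : Fin (k₁ + k₁)) :
    dE F p * Matrix.single a b (1 : F) = if blk a = p then Matrix.single a b 1 else 0 := by
  rw [dE_eq]
  ext i j
  rw [Matrix.diagonal_mul]
  split_ifs with h1 h2 h2 <;> simp [Matrix.single_apply] <;> grind

lemma single_mul_dE {k₁ : ℕ} (p : Fin k₁) (a b : Fin (k₁ + k₁)) :
    Matrix.single a b (1 : F) * dE F p = if blk b = p then Matrix.single a b 1 else 0 := by
  rw [dE_eq]
  ext i j
  rw [Matrix.mul_diagonal]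
  split_ifs with h1 h2 h2 <;> simp [Matrix.single_apply] <;> grind

/-- The matrix `diag(1, ε)`. -/
noncomputable def dG (k₁ : ℕ) (ε : F) : Matrix (Fin (k₁ + k₁)) (Fin (k₁ + k₁)) F :=
  dD (fun _ => 1) (fun _ => ε)

lemma dG_dagger (k₁ : ℕ) {ε : F} (hε : ε * ε = 1) :
    mDagger F k₁ (dG k₁ ε) = ε • dG k₁ ε := by
  rw [dG, dD_dagger]
  unfold dD
  rw [← Matrix.diagonal_smul]
  congr 1
  funext i
  rcases h : finSumFinEquiv.symm i with j | j <;> simp [h, hε]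

lemma dG_sq (k₁ : ℕ) {ε : F} (hε : ε * ε = 1) : dG k₁ ε * dG k₁ ε = 1 := by
  unfold dG dD
  rw [Matrix.diagonal_mul_diagonal, ← Matrix.diagonal_one]
  congr 1
  funext i
  rcases h : finSumFinEquiv.symm i with j | j <;> simp [hε]

lemma dG_comm {k₁ : ℕ} (ε : F) (p : Fin k₁) : dG k₁ ε * dE F p = dE F p * dG k₁ ε := by
  unfold dG dE dD
  rw [Matrix.diagonal_mul_diagonal, Matrix.diagonal_mul_diagonal]
  congr 1
  funext i
  rw [mul_comm]

lemma exists_blk {k₁ : ℕ} (p : Fin k₁) : ∃ i : Fin (k₁ + k₁), blk i = p :=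
  ⟨finSumFinEquiv (Sum.inl p), by simp [blk]⟩

/-! ### The key algebraic lemma -/

lemma key_ideal {k₁ : ℕ} (hk₁ : 2 ≤ k₁) {ε : F} (hε : ε * ε = 1) [CharZero F]
    (K : Submodule F (Matrix (Fin (k₁ + k₁)) (Fin (k₁ + k₁)) F)) (α δ : F)
    (hα : α ≠ 0) (hδ : δ ≠ 0) (hαδ : α * α - δ * δ ≠ 0)
    (hK : ∀ u v, mDagger F k₁ u = ε • u → v ∈ K → α • (u * v) + δ • (v * u) ∈ K)
    (hseed : ∀ u v, mDagger F k₁ u = ε • u → v * u = 0 → u * v ∈ K) :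
    ∀ v, v ∈ K := by
  -- multiplication by square roots of one
  have h1 : ∀ u v, mDagger F k₁ u = ε • u → u * u = 1 → v ∈ K → u * v ∈ K ∧ v * u ∈ K := by
    intro u v hu huu hv
    have a1 := hK u v hu hv
    have a2 := hK u _ hu a1
    have e2 : α • (u * (α • (u * v) + δ • (v * u))) + δ • ((α • (u * v) + δ • (v * u)) * u)
      = (α * α + δ * δ) • v + (2 * α * δ) • (u * v * u) := by
      have x1 : u * (u * v) = v := by rw [← mul_assoc, huu, one_mul]
      have x2 : v * u * u = v := by rw [mul_assoc, huu, mul_one]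
      have x3 : u * (v * u) = u * v * u := by rw [mul_assoc]
      rw [mul_add, add_mul, mul_smul_comm, mul_smul_comm, smul_mul_assoc, smul_mul_assoc,
        x1, x2, x3]
      module
    rw [e2] at a2
    have a3 : u * v * u ∈ K := by
      have := K.sub_mem a2 (K.smul_mem (α * α + δ * δ) hv)
      rw [add_sub_cancel_left] at this
      exact (K.smul_mem_iff (mul_ne_zero (mul_ne_zero two_ne_zero hα) hδ)).1 this
    have a4 := hK u _ hu a3
    have e4 : α • (u * (u * v * u)) + δ • (u * v * u * u) = α • (v * u) + δ • (u * v) := by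
      have x1 : u * (u * v * u) = v * u := by
        rw [← mul_assoc, ← mul_assoc, huu, one_mul]
      have x2 : u * v * u * u = u * v := by rw [mul_assoc, huu, mul_one]
      rw [x1, x2]
    rw [e4] at a4
    constructor
    · have := K.sub_mem (K.smul_mem α a1) (K.smul_mem δ a4)
      refine (K.smul_mem_iff hαδ).1 ?_
      convert this using 1
      module
    · have := K.sub_mem (K.smul_mem α a4) (K.smul_mem δ a1)
      refine (K.smul_mem_iff hαδ).1 ?_
      convert this using 1
      module
  have hG := dG_dagger k₁ hε
  have hGG := dG_sq k₁ hε
  have hGEd : ∀ p : Fin k₁, mDagger F k₁ (dG k₁ ε * dE F p) = ε • (dG k₁ ε * dE F p) := by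
    intro p
    rw [mDagger_mul, dE_dagger, hG, mul_smul_comm, dG_comm]
  -- multiplication by the block idempotents
  have h2 : ∀ (p : Fin k₁) v, v ∈ K → dE F p * v ∈ K ∧ v * dE F p ∈ K := by
    intro p v hv
    set g := dG k₁ ε
    set e := dE F p with he
    have hge : g * e = e * g := dG_comm ε p
    have hee : e * e = e := dE_sq p
    have hgeg : g * (e * g) = e := by rw [← hge, ← mul_assoc, hGG, one_mul]
    set w := g + (-2 : F) • (g * e) with hw
    have hwd : mDagger F k₁ w = ε • w := by
      rw [hw, mDagger_add, mDagger_smul, hG, hGEd p]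
      module
    have hgw : g * w = 1 + (-2 : F) • e := by
      rw [hw, mul_add, hGG, mul_smul_comm, hge, hgeg]
    have hwg : w * g = 1 + (-2 : F) • e := by
      rw [hw, add_mul, hGG, smul_mul_assoc, hge, mul_assoc, hGG, mul_one]
    have hww : w * w = 1 := by
      have : w * w = w * g + (-2 : F) • (w * g * e) := by
        conv_lhs => rw [hw, mul_add, mul_smul_comm, ← mul_assoc]
      rw [this, hwg, add_mul, one_mul, smul_mul_assoc, hee]
      module
    have b1 := (h1 g _ hG hGG (h1 w v hwd hww hv).1).1
    have b2 := (h1 w _ hwd hww (h1 g v hG hGG hv).2).2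
    rw [← mul_assoc, hgw, add_mul, one_mul, smul_mul_assoc] at b1
    rw [mul_assoc, hgw, mul_add, mul_one, mul_smul_comm] at b2
    have n2 : (-2 : F) ≠ 0 := neg_ne_zero.2 two_ne_zero
    exact ⟨(K.smul_mem_iff n2).1 ((K.add_mem_iff_right hv).1 b1),
      (K.smul_mem_iff n2).1 ((K.add_mem_iff_right hv).1 b2)⟩
  -- multiplication by off-diagonal matrix units
  have h3 : ∀ (a b : Fin (k₁ + k₁)), blk a ≠ blk b → ∀ v ∈ K,
      Matrix.single a b (1 : F) * v ∈ K ∧ v * Matrix.single a b (1 : F) ∈ K := by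
    intro a b hab v hv
    set x := Matrix.single a b (1 : F) with hx
    have ex : dE F (blk a) * x = x := by rw [hx, dE_mul_single, if_pos rfl]
    have xe : x * dE F (blk b) = x := by rw [hx, single_mul_dE, if_pos rfl]
    have hp : dE F (blk a) * dE F (blk b) = 0 := dE_mul_ne hab
    set p := dE F (blk a)
    set q := dE F (blk b)
    set y := mDagger F k₁ x with hy
    have hpy : p * y = 0 := by
      have : y = q * y := by
        conv_lhs => rw [hy, ← xe, mDagger_mul, dE_dagger]
      rw [this, ← mul_assoc, hp, zero_mul]
    have hyq : y * q = 0 := by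
      have : y = y * p := by
        conv_lhs => rw [hy, ← ex, mDagger_mul, dE_dagger]
      rw [this, mul_assoc, hp, mul_zero]
    have hu : mDagger F k₁ (x + ε • y) = ε • (x + ε • y) := by
      rw [mDagger_add, mDagger_smul, hy, mDagger_mDagger, smul_add, smul_smul, hε, one_smul]
      exact add_comm _ _
    have c1 := (h2 (blk a) _ (hK _ _ hu (h2 (blk b) v hv).1)).1
    have c2 := (h2 (blk b) _ (hK _ _ hu (h2 (blk a) v hv).2)).2
    constructor
    · refine (K.smul_mem_iff hα).1 ?_
      convert c1 using 1
      rw [mul_add, mul_smul_comm, mul_smul_comm, ← mul_assoc p (x + ε • y), mul_add p x, ex,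
        mul_smul_comm, hpy, smul_zero, add_zero, ← mul_assoc x, xe, mul_assoc q v,
        ← mul_assoc p q, hp, zero_mul, smul_zero, add_zero]
    · refine (K.smul_mem_iff hδ).1 ?_
      convert c2 using 1
      rw [add_mul, smul_mul_assoc, smul_mul_assoc, mul_assoc (v * p) _ q, add_mul x (ε • y) q,
        xe, smul_mul_assoc, hyq, smul_zero, add_zero, mul_assoc v p x, ex, mul_assoc _ _ q,
        mul_assoc v p q, hp, mul_zero, mul_zero, smul_zero, zero_add]
  have hne : ∀ p : Fin k₁, ∃ q : Fin k₁, q ≠ p := by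
    have : Nontrivial (Fin k₁) := Fin.nontrivial_iff_two_le.2 hk₁
    exact fun p => exists_ne p
  -- multiplication by all matrix units
  have h4 : ∀ (a b : Fin (k₁ + k₁)), ∀ v ∈ K,
      Matrix.single a b (1 : F) * v ∈ K ∧ v * Matrix.single a b (1 : F) ∈ K := by
    intro a b v hv
    by_cases hab : blk a = blk b
    · obtain ⟨q, hq⟩ := hne (blk a)
      obtain ⟨c, hc⟩ := exists_blk q
      have hac : blk a ≠ blk c := by rw [hc]; exact hq.symm
      have hcb : blk c ≠ blk b := by rw [← hab]; exact hac.symm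
      have e : Matrix.single a b (1 : F) = Matrix.single a c 1 * Matrix.single c b 1 := by
        simp
      rw [e]
      constructor
      · rw [mul_assoc]
        exact (h3 a c hac _ (h3 c b hcb v hv).1).1
      · rw [← mul_assoc]
        exact (h3 c b hcb _ (h3 a c hac v hv).2).2
    · exact h3 a b hab v hv
  -- a nonzero element
  obtain ⟨a, b, hab⟩ : ∃ a b : Fin (k₁ + k₁), blk a ≠ blk b := by
    obtain ⟨q, hq⟩ := hne ⟨0, by omega⟩
    obtain ⟨a, ha⟩ := exists_blk q
    obtain ⟨b, hb⟩ := exists_blk (⟨0, by omega⟩ : Fin k₁)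
    exact ⟨a, b, by rw [ha, hb]; exact hq⟩
  have h5 : Matrix.single a b (1 : F) ∈ K := by
    have s1 := hseed (dG k₁ ε * dE F (blk a)) (Matrix.single a b 1) (hGEd _) (by
      rw [dG_comm, ← mul_assoc, single_mul_dE, if_neg hab.symm, zero_mul])
    rw [mul_assoc, dE_mul_single, if_pos rfl] at s1
    have := (h1 _ _ hG hGG s1).1
    rwa [← mul_assoc, hGG, one_mul] at this
  intro v
  rw [Matrix.matrix_eq_sum_single v]
  refine K.sum_mem fun i _ => K.sum_mem fun j _ => ?_
  have h6 : Matrix.single i j (1 : F) ∈ K := by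
    have := (h4 b j _ (h4 i a _ h5).1).2
    simpa using this
  have : Matrix.single i j (v i j) = v i j • Matrix.single i j (1 : F) := by simp
  rw [this]
  exact K.smul_mem _ h6

/-! ### The generators of the algebra and the master product formula -/

/-- The spanning elements of `R†`, with `N = ℓ - 1`. -/
noncomputable def gX (k₁ N : ℕ) (u : Matrix (Fin (k₁ + k₁)) (Fin (k₁ + k₁)) F) (m n : ℕ) :
    MatCarrier F (k₁ + k₁) :=
  ((n + N).choose N : F) • Finsupp.single (m, n + N) u -
    ((-1 : F) ^ N * ((m + N).choose N : F)) • Finsupp.single (n, m + N) (mDagger F k₁ u)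

lemma gX_add (k₁ N : ℕ) (u v : Matrix (Fin (k₁ + k₁)) (Fin (k₁ + k₁)) F) (m n : ℕ) :
    gX k₁ N (u + v) m n = gX k₁ N u m n + gX k₁ N v m n := by
  simp only [gX, mDagger_add, Finsupp.single_add]
  module

lemma gX_smul (k₁ N : ℕ) (c : F) (u : Matrix (Fin (k₁ + k₁)) (Fin (k₁ + k₁)) F) (m n : ℕ) :
    gX k₁ N (c • u) m n = c • gX k₁ N u m n := by
  simp only [gX, mDagger_smul, ← Finsupp.smul_single]
  module

lemma RkklDagger_succ (k₁ N : ℕ) : RkklDagger F k₁ (N + 1) =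
    Submodule.span F {x | ∃ (u : Matrix (Fin (k₁ + k₁)) (Fin (k₁ + k₁)) F) (m n : ℕ),
      x = gX k₁ N u m n} := rfl

lemma gX_mem (k₁ N : ℕ) (u : Matrix (Fin (k₁ + k₁)) (Fin (k₁ + k₁)) F) (m n : ℕ) :
    gX k₁ N u m n ∈ RkklDagger F k₁ (N + 1) := by
  rw [RkklDagger_succ]
  exact Submodule.subset_span ⟨u, m, n, rfl⟩

lemma mProd_zero (k s : ℕ) (f : MatCarrier F k) : mProd F k s f 0 = 0 := by
  simp [mProd]

lemma mProd_add (k s : ℕ) (f g h : MatCarrier F k) :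
    mProd F k s f (g + h) = mProd F k s f g + mProd F k s f h := by
  unfold mProd
  rw [← Finsupp.sum_add]
  refine Finsupp.sum_congr fun p _ => ?_
  apply Finsupp.sum_add_index'
  · intro q; simp
  · intro q b₁ b₂
    simp only [mul_add, add_mul, Finsupp.single_add, smul_add]
    split_ifs <;> abel

lemma mProd_smul (k s : ℕ) (c : F) (f g : MatCarrier F k) :
    mProd F k s f (c • g) = c • mProd F k s f g := by
  unfold mProd
  rw [Finsupp.smul_sum]
  refine Finsupp.sum_congr fun p _ => ?_
  rw [Finsupp.sum_smul_index', Finsupp.smul_sum]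
  · refine Finsupp.sum_congr fun q _ => ?_
    simp only [mul_smul_comm, smul_mul_assoc, ← Finsupp.smul_single, smul_sub]
    split_ifs <;> simp [smul_comm c]
  · intro q; simp

lemma mProd_single_s12 (k s N a b : ℕ) (u v : Matrix (Fin k) (Fin k) F) :
    mProd F k s (Finsupp.single (0, N) u) (Finsupp.single (a, b) v) =
    (if s ≤ N + a then ((-1 : F) ^ N * ((a + N).choose N : F)) •
        Finsupp.single (N + a - s, b) (u * v) else 0) -
    (if s ≤ N + b then ((N + b - s).choose N : F) •
        Finsupp.single (a, N + b - s) (v * u) else 0) := by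
  unfold mProd
  rw [Finsupp.sum_single_index, Finsupp.sum_single_index]
  · simp
  · simp
  · simp

lemma mProd_single' (k s N a n : ℕ) (u v : Matrix (Fin k) (Fin k) F) :
    mProd F k s (Finsupp.single (0, N) u) (Finsupp.single (a, n + N) v) =
    (if s ≤ N + a then ((-1 : F) ^ N * ((a + N).choose N : F)) •
        Finsupp.single (N + a - s, n + N) (u * v) else 0) -
    (if s ≤ N + n then ((N + n - s + N).choose N : F) •
        Finsupp.single (a, N + n - s + N) (v * u) else 0) := by
  rw [mProd_single_s12]
  congr 1
  by_cases h : s ≤ N + n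
  · rw [if_pos h, if_pos (by omega)]
    have : N + (n + N) - s = N + n - s + N := by omega
    rw [this]
  · rw [if_neg h]
    split_ifs with h'
    · rw [Nat.choose_eq_zero_of_lt (by omega)]; simp
    · rfl

lemma neg_one_pow_sq (N : ℕ) : ((-1 : F) ^ N) * ((-1 : F) ^ N) = 1 := by
  rw [← mul_pow]; simp

lemma mProd_gX (k₁ N s m n : ℕ) (u v : Matrix (Fin (k₁ + k₁)) (Fin (k₁ + k₁)) F)
    (hu : mDagger F k₁ u = (-(-1 : F) ^ N) • u) :
    mProd F (k₁ + k₁) s (Finsupp.single (0, N) u) (gX k₁ N v m n) =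
    (if s ≤ N + m then ((-1 : F) ^ N * ((m + N).choose N : F)) • gX k₁ N (u * v) (N + m - s) n
      else 0) -
    (if s ≤ N + n then ((n + N).choose N : F) • gX k₁ N (v * u) m (N + n - s) else 0) := by
  have hN := neg_one_pow_sq (F := F) N
  rw [gX, sub_eq_add_neg, ← neg_smul, mProd_add, mProd_smul, mProd_smul, mProd_single',
    mProd_single']
  simp only [gX, mDagger_mul, hu, mul_smul_comm, smul_mul_assoc, ← Finsupp.smul_single]
  generalize (-1 : F) ^ N = e at *
  split_ifs
  all_goals
    match_scalars <;> (first | ring1 |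
      linear_combination (-e * ((m + N).choose N : F) * ((N + m - s + N).choose N : F)) * hN)


/-- The vectors of minimal weight. -/
lemma minimal_weight_iff [CharZero F] (k₁ N : ℕ) (y : MatCarrier F (k₁ + k₁)) :
    (y ∈ RkklDagger F k₁ (N + 1) ∧ y ∈ mWeight F (k₁ + k₁) (N + 1)) ↔
    ∃ u : Matrix (Fin (k₁ + k₁)) (Fin (k₁ + k₁)) F,
      mDagger F k₁ u = (-(-1 : F) ^ N) • u ∧ y = Finsupp.single (0, N) u := by
  have hN := neg_one_pow_sq (F := F) N
  constructor
  · rintro ⟨h1, h2⟩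
    have a1 : (∀ i : ℕ × ℕ, i.2 < N → y i = 0) ∧
        mDagger F k₁ (y (0, N)) = (-(-1 : F) ^ N) • y (0, N) := by
      clear h2
      rw [RkklDagger_succ] at h1
      induction h1 using Submodule.span_induction with
      | mem x hx =>
        obtain ⟨u, m, n, rfl⟩ := hx
        refine ⟨fun i hi => ?_, ?_⟩
        · have e1 : ((m, n + N) : ℕ × ℕ) ≠ i := by rintro rfl; simp at hi
          have e2 : ((n, m + N) : ℕ × ℕ) ≠ i := by rintro rfl; simp at hi
          simp [gX, e1, e2]
        · by_cases hmn : m = 0 ∧ n = 0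
          · obtain ⟨rfl, rfl⟩ := hmn
            have : gX k₁ N u 0 0 (0, N) = u + (-(-1 : F) ^ N) • mDagger F k₁ u := by
              simp [gX, sub_eq_add_neg]
            rw [this, mDagger_add, mDagger_smul, mDagger_mDagger, smul_add, smul_smul,
              neg_mul_neg, hN, one_smul]
            exact add_comm _ _
          · have e1 : ((m, n + N) : ℕ × ℕ) ≠ (0, N) := by
              intro h; simp only [Prod.mk.injEq] at h; omega
            have e2 : ((n, m + N) : ℕ × ℕ) ≠ (0, N) := by
              intro h; simp only [Prod.mk.injEq] at h; omega
            have : gX k₁ N u m n (0, N) = 0 := by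
              rw [gX, Finsupp.sub_apply, Finsupp.smul_apply, Finsupp.smul_apply,
                Finsupp.single_eq_of_ne e1.symm, Finsupp.single_eq_of_ne e2.symm]
              simp
            rw [this]
            simp [mDagger]
      | zero => simp [mDagger]
      | add x y _ _ hx hy =>
        refine ⟨fun i hi => ?_, ?_⟩
        · rw [Finsupp.add_apply, hx.1 i hi, hy.1 i hi, add_zero]
        · rw [Finsupp.add_apply, mDagger_add, hx.2, hy.2, smul_add]
      | smul c x _ hx =>
        refine ⟨fun i hi => ?_, ?_⟩
        · rw [Finsupp.smul_apply, hx.1 i hi, smul_zero]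
        · rw [Finsupp.smul_apply, mDagger_smul, hx.2, smul_comm]
    have a2 : ∀ i : ℕ × ℕ, i.1 + i.2 ≠ N → y i = 0 := by
      clear h1 a1
      rw [mWeight] at h2
      induction h2 using Submodule.span_induction with
      | mem x hx =>
        obtain ⟨u, m, n, h, rfl⟩ := hx
        intro i hi
        apply Finsupp.single_eq_of_ne
        rintro rfl
        simp at hi
        omega
      | zero => simp
      | add x y _ _ hx hy =>
        intro i hi
        rw [Finsupp.add_apply, hx i hi, hy i hi, add_zero]
      | smul c x _ hx =>
        intro i hi
        rw [Finsupp.smul_apply, hx i hi, smul_zero]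
    refine ⟨y (0, N), a1.2, ?_⟩
    apply Finsupp.ext
    intro i
    by_cases hi : i = (0, N)
    · rw [hi, Finsupp.single_eq_same]
    · rw [Finsupp.single_eq_of_ne hi]
      by_cases h' : i.2 < N
      · exact a1.1 i h'
      · apply a2
        intro h3
        apply hi
        ext <;> simp <;> omega
  · rintro ⟨u, hu, rfl⟩
    refine ⟨?_, Submodule.subset_span ⟨u, 0, N, by omega, rfl⟩⟩
    have : Finsupp.single (0, N) u = (2⁻¹ : F) • gX k₁ N u 0 0 := by
      simp only [gX, hu, zero_add, Nat.choose_self, Nat.cast_one, mul_one, ← Finsupp.smul_single]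
      match_scalars
      linear_combination (-2⁻¹ : F) * hN + (-1 : F) * inv_mul_cancel₀ (two_ne_zero (α := F))
    rw [this]
    exact Submodule.smul_mem _ _ (gX_mem _ _ _ _ _)

end Helpers

/-- **Theorem 4.2** (for `R†_{k×k,ℓ}`, `k = 2k₁ ≥ 4` even): for `ℓ ≥ 2`, the conformal
algebra `R†_{k×k,ℓ}` is generated by its subspace of minimal weight `ℓ`, namely by
`X^{(ℓ)} = R†_{k×k,ℓ} ∩ R_{k×k}^{(ℓ)}`. -/
theorem RkklDagger_generated_by_minimal_weight (F : Type*) [Field F] [CharZero F]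
    (k₁ ℓ : ℕ) (hk₁ : 2 ≤ k₁) (hℓ : 2 ≤ ℓ) :
    Submodule.span F {x : MatCarrier F (k₁ + k₁) |
      IterProd (mProd F (k₁ + k₁))
        {y : MatCarrier F (k₁ + k₁) |
          y ∈ RkklDagger F k₁ ℓ ∧ y ∈ mWeight F (k₁ + k₁) ℓ} x}
      = RkklDagger F k₁ ℓ := by
  obtain ⟨M, rfl⟩ : ∃ M, ℓ = (M + 1) + 1 := ⟨ℓ - 2, by omega⟩
  obtain ⟨N, hN⟩ : ∃ N, N = M + 1 := ⟨_, rfl⟩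
  rw [← hN]
  set X : Set (MatCarrier F (k₁ + k₁)) := {y : MatCarrier F (k₁ + k₁) |
          y ∈ RkklDagger F k₁ (N + 1) ∧ y ∈ mWeight F (k₁ + k₁) (N + 1)} with hX
  set W := Submodule.span F {x : MatCarrier F (k₁ + k₁) | IterProd (mProd F (k₁ + k₁)) X x}
    with hW
  have hmem : ∀ y, y ∈ X ↔ ∃ u : Matrix (Fin (k₁ + k₁)) (Fin (k₁ + k₁)) F,
      mDagger F k₁ u = (-(-1 : F) ^ N) • u ∧ y = Finsupp.single (0, N) u :=
    minimal_weight_iff k₁ N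
  apply le_antisymm
  · -- closure of `R†` under the products
    rw [hW, Submodule.span_le]
    intro x hx
    induction hx with
    | base v hv => exact hv.1
    | step u₀ hu₀ n w hw ih =>
      obtain ⟨u, hu, rfl⟩ := (hmem u₀).1 hu₀
      have ih' : w ∈ RkklDagger F k₁ (N + 1) := ih
      change _ ∈ RkklDagger F k₁ (N + 1)
      clear ih hw
      rw [RkklDagger_succ] at ih'
      induction ih' using Submodule.span_induction with
      | mem x hx =>
        obtain ⟨v, a, b, rfl⟩ := hx
        rw [mProd_gX k₁ N n a b u v hu]
        apply Submodule.sub_mem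
        · split_ifs
          · exact Submodule.smul_mem _ _ (gX_mem _ _ _ _ _)
          · exact Submodule.zero_mem _
        · split_ifs
          · exact Submodule.smul_mem _ _ (gX_mem _ _ _ _ _)
          · exact Submodule.zero_mem _
      | zero => rw [mProd_zero]; exact Submodule.zero_mem _
      | add x y _ _ hx hy => rw [mProd_add]; exact Submodule.add_mem _ (hx) (hy)
      | smul c x _ hx => rw [mProd_smul]; exact Submodule.smul_mem _ _ (hx)
  · have hstep : ∀ (s : ℕ) (u : Matrix (Fin (k₁ + k₁)) (Fin (k₁ + k₁)) F),
        mDagger F k₁ u = (-(-1 : F) ^ N) • u → ∀ w ∈ W,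
        mProd F (k₁ + k₁) s (Finsupp.single (0, N) u) w ∈ W := by
      intro s u hu w hw
      have huX : Finsupp.single (0, N) u ∈ X := (hmem _).2 ⟨u, hu, rfl⟩
      rw [hW] at hw
      induction hw using Submodule.span_induction with
      | mem x hx => exact Submodule.subset_span (IterProd.step _ huX s x hx)
      | zero => rw [mProd_zero]; exact Submodule.zero_mem _
      | add x y _ _ hx hy => rw [mProd_add]; exact Submodule.add_mem _ hx hy
      | smul c x _ hx => rw [mProd_smul]; exact Submodule.smul_mem _ _ hx
    have hε : (-(-1 : F) ^ N) * (-(-1 : F) ^ N) = 1 := by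
      rw [neg_mul_neg, neg_one_pow_sq]
    have hs1 : ((-1 : F) ^ N) ≠ 0 := pow_ne_zero _ (neg_ne_zero.2 one_ne_zero)
    have hch : ∀ a : ℕ, ((a + N).choose N : F) ≠ 0 := fun a =>
      Nat.cast_ne_zero.2 (Nat.pos_iff_ne_zero.1 (Nat.choose_pos (by omega)))
    -- the product raising the degree by one
    have hup : ∀ (m n : ℕ) (u v : Matrix (Fin (k₁ + k₁)) (Fin (k₁ + k₁)) F),
        mDagger F k₁ u = (-(-1 : F) ^ N) • u → gX k₁ N v m n ∈ W →
        ((-1 : F) ^ N * ((m + N).choose N : F)) • gX k₁ N (u * v) (m + 1) n -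
          ((n + N).choose N : F) • gX k₁ N (v * u) m (n + 1) ∈ W := by
      intro m n u v hu hv
      have := hstep M u hu _ hv
      rw [mProd_gX k₁ N M m n u v hu, if_pos (by omega), if_pos (by omega)] at this
      have e1 : N + m - M = m + 1 := by omega
      have e2 : N + n - M = n + 1 := by omega
      rwa [e1, e2] at this
    -- the product preserving the degree
    have hsame : ∀ (m n : ℕ) (u v : Matrix (Fin (k₁ + k₁)) (Fin (k₁ + k₁)) F),
        mDagger F k₁ u = (-(-1 : F) ^ N) • u → gX k₁ N v m n ∈ W →
        ((-1 : F) ^ N * ((m + N).choose N : F)) • gX k₁ N (u * v) m n -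
          ((n + N).choose N : F) • gX k₁ N (v * u) m n ∈ W := by
      intro m n u v hu hv
      have := hstep N u hu _ hv
      rw [mProd_gX k₁ N N m n u v hu, if_pos (by omega), if_pos (by omega)] at this
      have e1 : N + m - N = m := by omega
      have e2 : N + n - N = n := by omega
      rwa [e1, e2] at this
    have gX_zero : ∀ m n, gX k₁ N (0 : Matrix (Fin (k₁ + k₁)) (Fin (k₁ + k₁)) F) m n = 0 := by
      intro m n
      have := gX_smul k₁ N (0 : F) (0 : Matrix (Fin (k₁ + k₁)) (Fin (k₁ + k₁)) F) m n
      rwa [zero_smul, zero_smul] at this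
    have main : ∀ (d m n : ℕ), m + n = d →
        ∀ v : Matrix (Fin (k₁ + k₁)) (Fin (k₁ + k₁)) F, gX k₁ N v m n ∈ W := by
      intro d
      induction d with
      | zero =>
        intro m n hmn v
        obtain ⟨rfl, rfl⟩ : m = 0 ∧ n = 0 := by omega
        refine Submodule.subset_span (IterProd.base _ ⟨gX_mem _ _ _ _ _, ?_⟩)
        have hw : ∀ u, (Finsupp.single (0, N) u : MatCarrier F (k₁ + k₁)) ∈
            mWeight F (k₁ + k₁) (N + 1) :=
          fun u => Submodule.subset_span ⟨u, 0, N, by omega, rfl⟩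
        rw [gX, zero_add]
        exact Submodule.sub_mem _ (Submodule.smul_mem _ _ (hw _)) (Submodule.smul_mem _ _ (hw _))
      | succ d ih =>
        have htop : ∀ v : Matrix (Fin (k₁ + k₁)) (Fin (k₁ + k₁)) F,
            gX k₁ N v (d + 1) 0 ∈ W := by
          let K : Submodule F (Matrix (Fin (k₁ + k₁)) (Fin (k₁ + k₁)) F) :=
            { carrier := {v | gX k₁ N v (d + 1) 0 ∈ W}
              add_mem' := by
                intro a b ha hb
                change gX k₁ N (a + b) (d + 1) 0 ∈ W
                rw [gX_add]
                exact W.add_mem ha hb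
              zero_mem' := by
                change gX k₁ N 0 (d + 1) 0 ∈ W
                rw [gX_zero]
                exact W.zero_mem
              smul_mem' := by
                intro c a ha
                change gX k₁ N (c • a) (d + 1) 0 ∈ W
                rw [gX_smul]
                exact W.smul_mem c ha }
          refine key_ideal hk₁ hε K ((-1 : F) ^ N * ((d + 1 + N).choose N : F)) (-1)
            (mul_ne_zero hs1 (hch _)) (neg_ne_zero.2 one_ne_zero) ?_ ?_ ?_
          · have h2 : 2 ≤ (d + 1 + N).choose N := by
              have p1 : 0 < (d + 1 + M).choose M := Nat.choose_pos (by omega)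
              have p2 : 0 < (d + 1 + M).choose (M + 1) := Nat.choose_pos (by omega)
              have := Nat.choose_succ_succ (d + 1 + M) M
              rw [hN, ← add_assoc]
              simp only [Nat.succ_eq_add_one] at this
              omega
            have h3 : (d + 1 + N).choose N * (d + 1 + N).choose N ≠ 1 := by nlinarith
            intro h
            apply h3
            have hsq := neg_one_pow_sq (F := F) N
            have : ((d + 1 + N).choose N : F) * ((d + 1 + N).choose N : F) = 1 := by
              linear_combination h -
                ((d + 1 + N).choose N : F) * ((d + 1 + N).choose N : F) * hsq
            exact_mod_cast this
          · intro u v hu hv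
            have := hsame (d + 1) 0 u v hu hv
            change gX k₁ N _ (d + 1) 0 ∈ W
            rw [gX_add, gX_smul, gX_smul]
            convert this using 1
            simp [sub_eq_add_neg]
          · intro u v hu huv
            have := hup d 0 u v hu (ih d 0 rfl v)
            rw [huv, gX_zero, smul_zero, sub_zero] at this
            exact (W.smul_mem_iff (mul_ne_zero hs1 (hch _))).1 this
        intro m n
        induction n generalizing m with
        | zero =>
          intro hmn v
          obtain rfl : m = d + 1 := by omega
          exact htop v
        | succ n ihn =>
          intro hmn v
          have hg := dG_dagger k₁ hε
          have := hup m n (dG k₁ (-(-1 : F) ^ N)) (v * dG k₁ (-(-1 : F) ^ N)) hg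
            (ih m n (by omega) _)
          rw [mul_assoc v, dG_sq k₁ hε, mul_one] at this
          exact (W.smul_mem_iff (hch n)).1 ((W.sub_mem_iff_right
            (W.smul_mem _ (ihn (m + 1) (by omega) _))).1 this)
    rw [RkklDagger_succ, Submodule.span_le]
    rintro x ⟨u, m, n, rfl⟩
    exact main (m + n) m n rfl u
end

section
/- Let ℓ ≥ 2 be even and X = R_{k×k,ℓ}, with minimal-weight subspace X^{(ℓ)} = span{u(0,ℓ-1) : u ∈ A} and product u ∘ v = u⁽ˡ⁻¹⁾v ((ℓ-1)-th product) on X^{(ℓ)}. Then for all u, v ∈ A one has u(0,ℓ-1) ∘ v(0,ℓ-1) = -(uv+vu)(0,ℓ-1); consequently the linear map u ↦ -u(0,ℓ-1) is an isomorphism from the Jordan algebra M_k(F)⁺ (the space A with product u∗v = uv+vu) onto (X^{(ℓ)}, ∘), so (X^{(ℓ)}, ∘) is a simple Jordan algebra of type A, independent of ℓ. -/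
theorem aux_prod (F : Type*) [Field F] (k L : ℕ) (hL : Odd L)
    (u v : Matrix (Fin k) (Fin k) F) :
    mProd F k L (Finsupp.single ((0 : ℕ), L) u) (Finsupp.single ((0 : ℕ), L) v)
      = -(Finsupp.single ((0 : ℕ), L) (u * v + v * u)) := by
  unfold mProd
  rw [Finsupp.sum_single_index, Finsupp.sum_single_index]
  · simp [hL.neg_one_pow, Finsupp.single_add]
    abel
  · simp
  · simp

/-- A nonzero Jordan ideal of `M_k(F)⁺` is everything. -/
theorem aux_simple (F : Type*) [Field F] [CharZero F] (k : ℕ)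
    (J : Submodule F (Matrix (Fin k) (Fin k) F))
    (hJ : ∀ a, ∀ b ∈ J, a * b + b * a ∈ J) (hne : J ≠ ⊥) : J = ⊤ := by
  have h2 : (2 : F) ≠ 0 := two_ne_zero
  have hU : ∀ x, ∀ b ∈ J, x * b * x ∈ J := by
    intro x b hb
    have h1 := J.sub_mem (hJ x _ (hJ x b hb)) (hJ (x * x) b hb)
    have h3 : x * (x * b + b * x) + (x * b + b * x) * x - (x * x * b + b * (x * x))
        = (2 : F) • (x * b * x) := by
      rw [two_smul]; noncomm_ring
    rw [h3] at h1
    exact (J.smul_mem_iff h2).1 h1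
  have hV : ∀ x y, ∀ b ∈ J, x * b * y + y * b * x ∈ J := by
    intro x y b hb
    have h1 := J.sub_mem (J.sub_mem (hU (x + y) b hb) (hU x b hb)) (hU y b hb)
    have h3 : (x + y) * b * (x + y) - x * b * x - y * b * y = x * b * y + y * b * x := by
      noncomm_ring
    rwa [h3] at h1
  obtain ⟨b, hb, hb0⟩ := (Submodule.ne_bot_iff J).1 hne
  have : ∃ i j, b i j ≠ 0 := by
    by_contra! h
    exact hb0 (Matrix.ext h)
  obtain ⟨i, j, hij⟩ := this
  have hE : Matrix.single j i (1 : F) ∈ J := by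
    have h1 := hU (Matrix.single j i (1 : F)) b hb
    have h3 : Matrix.single j i (1 : F) * b * Matrix.single j i (1 : F)
        = b i j • Matrix.single j i (1 : F) := by
      rw [Matrix.single_mul_mul_single]; simp
    rw [h3] at h1
    exact (J.smul_mem_iff hij).1 h1
  have hall : ∀ p q, Matrix.single p q (1 : F) ∈ J := by
    intro p q
    have h1 := hV (Matrix.single p j (1 : F)) (Matrix.single i q (1 : F)) _ hE
    by_cases h : q = j ∧ i = p
    · obtain ⟨rfl, rfl⟩ := h
      simp only [Matrix.single_mul_single_same, mul_one] at h1
      rw [← two_smul F] at h1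
      exact (J.smul_mem_iff h2).1 h1
    · have h3 : Matrix.single i q (1 : F) * Matrix.single j i (1 : F)
          * Matrix.single p j (1 : F) = 0 := by
        by_cases hq : q = j
        · have hp : i ≠ p := fun hp => h ⟨hq, hp⟩
          rw [mul_assoc, Matrix.single_mul_single_of_ne _ _ _ _ hp, mul_zero]
        · rw [Matrix.single_mul_single_of_ne _ _ _ _ hq, zero_mul]
      rw [h3] at h1
      simpa using h1
  rw [eq_top_iff]
  intro m _
  rw [Matrix.matrix_eq_sum_single m]
  refine J.sum_mem fun p _ => J.sum_mem fun q _ => ?_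
  have := J.smul_mem (m p q) (hall p q)
  simpa [Matrix.smul_single] using this

/-- **Theorem 4.3, type A**: let `ℓ ≥ 2` be even and `X = R_{k×k,ℓ}`, with
minimal-weight subspace `X^{(ℓ)} = span{u(0,ℓ-1) : u ∈ A} = {u(0,ℓ-1) : u ∈ A}` and
product `x ∘ y = x⁽ˡ⁻¹⁾y`.  Then `u(0,ℓ-1) ∘ v(0,ℓ-1) = -(uv+vu)(0,ℓ-1)`, the map
`u ↦ -u(0,ℓ-1)` is an isomorphism from the Jordan algebra `M_k(F)⁺` onto
`(X^{(ℓ)}, ∘)`, and `(X^{(ℓ)}, ∘)` is a simple Jordan algebra (of type A,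
independent of `ℓ`). -/
theorem Rkkl_minimal_weight_jordan_typeA (F : Type*) [Field F] [CharZero F]
    (k ℓ : ℕ) (hk : 1 ≤ k) (hℓ : 2 ≤ ℓ) (heven : Even ℓ) :
    -- the product formula on the minimal-weight subspace
    (∀ u v : Matrix (Fin k) (Fin k) F,
      mProd F k (ℓ - 1) (Finsupp.single ((0 : ℕ), ℓ - 1) u)
          (Finsupp.single ((0 : ℕ), ℓ - 1) v)
        = -(Finsupp.single ((0 : ℕ), ℓ - 1) (u * v + v * u))) ∧
    -- u ↦ -u(0,ℓ-1) is an isomorphism from M_k(F)⁺ onto (X^{(ℓ)}, ∘)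
    (Function.Injective fun u : Matrix (Fin k) (Fin k) F =>
      -(Finsupp.single ((0 : ℕ), ℓ - 1) u : MatCarrier F k)) ∧
    (Set.range (fun u : Matrix (Fin k) (Fin k) F =>
        -(Finsupp.single ((0 : ℕ), ℓ - 1) u : MatCarrier F k))
      = {x : MatCarrier F k | ∃ u, x = Finsupp.single ((0 : ℕ), ℓ - 1) u}) ∧
    (∀ u v : Matrix (Fin k) (Fin k) F,
      -(Finsupp.single ((0 : ℕ), ℓ - 1) (u * v + v * u) : MatCarrier F k)
        = mProd F k (ℓ - 1) (-(Finsupp.single ((0 : ℕ), ℓ - 1) u))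
            (-(Finsupp.single ((0 : ℕ), ℓ - 1) v))) ∧
    -- (X^{(ℓ)}, ∘) is a simple Jordan algebra
    (∀ x ∈ {x : MatCarrier F k | ∃ u, x = Finsupp.single ((0 : ℕ), ℓ - 1) u},
     ∀ y ∈ {x : MatCarrier F k | ∃ u, x = Finsupp.single ((0 : ℕ), ℓ - 1) u},
      mProd F k (ℓ - 1) x y
        ∈ {x : MatCarrier F k | ∃ u, x = Finsupp.single ((0 : ℕ), ℓ - 1) u} ∧
      mProd F k (ℓ - 1) x y = mProd F k (ℓ - 1) y x ∧
      mProd F k (ℓ - 1) (mProd F k (ℓ - 1) (mProd F k (ℓ - 1) x x) y) x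
        = mProd F k (ℓ - 1) (mProd F k (ℓ - 1) x x) (mProd F k (ℓ - 1) y x)) ∧
    (∃ x ∈ {x : MatCarrier F k | ∃ u, x = Finsupp.single ((0 : ℕ), ℓ - 1) u},
     ∃ y ∈ {x : MatCarrier F k | ∃ u, x = Finsupp.single ((0 : ℕ), ℓ - 1) u},
      mProd F k (ℓ - 1) x y ≠ 0) ∧
    (∀ I : Submodule F (MatCarrier F k),
      I ≤ Submodule.span F
        {x : MatCarrier F k | ∃ u, x = Finsupp.single ((0 : ℕ), ℓ - 1) u} →
      (∀ a ∈ {x : MatCarrier F k | ∃ u, x = Finsupp.single ((0 : ℕ), ℓ - 1) u},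
        ∀ b ∈ I, mProd F k (ℓ - 1) a b ∈ I) →
      I = ⊥ ∨ I = Submodule.span F
        {x : MatCarrier F k | ∃ u, x = Finsupp.single ((0 : ℕ), ℓ - 1) u}) := by
  obtain ⟨L, hL⟩ : ∃ L, L = ℓ - 1 := ⟨_, rfl⟩
  have hodd : Odd L := by
    obtain ⟨r, hr⟩ := heven
    exact ⟨r - 1, by omega⟩
  rw [← hL]
  have hP := aux_prod F k L hodd
  have hN : ∀ u : Matrix (Fin k) (Fin k) F,
      -(Finsupp.single ((0 : ℕ), L) u : MatCarrier F k) = Finsupp.single ((0 : ℕ), L) (-u) :=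
    fun u => (Finsupp.single_neg _ _).symm
  refine ⟨hP, ?_, ?_, ?_, ?_, ?_, ?_⟩
  · intro u v h
    exact Finsupp.single_injective _ (neg_injective h)
  · ext x
    constructor
    · rintro ⟨u, rfl⟩
      exact ⟨-u, hN u⟩
    · rintro ⟨u, rfl⟩
      exact ⟨-u, by simp⟩
  · intro u v
    rw [hN u, hN v, hP]
    simp
  · rintro _ ⟨u, rfl⟩ _ ⟨v, rfl⟩
    refine ⟨⟨_, (hP u v).trans (hN _)⟩, ?_, ?_⟩
    · rw [hP, hP, add_comm]
    · simp only [hP, hN]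
      congr 1
      noncomm_ring
  · refine ⟨_, ⟨1, rfl⟩, _, ⟨1, rfl⟩, ?_⟩
    rw [hP, neg_ne_zero, Ne, Finsupp.single_eq_zero]
    intro h
    have := congrFun (congrFun h ⟨0, hk⟩) ⟨0, hk⟩
    norm_num at this
  · intro I hI hid
    have hspan : Submodule.span F
        {x : MatCarrier F k | ∃ u, x = Finsupp.single ((0 : ℕ), L) u}
        = LinearMap.range (Finsupp.lsingle (R := F) (M := Matrix (Fin k) (Fin k) F)
          ((0 : ℕ), L)) := by
      rw [← Submodule.span_eq (LinearMap.range _)]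
      congr 1
      ext x
      constructor
      · rintro ⟨u, rfl⟩
        exact ⟨u, rfl⟩
      · rintro ⟨u, rfl⟩
        exact ⟨u, rfl⟩
    rw [hspan] at hI ⊢
    by_cases hbot : I.comap (Finsupp.lsingle (R := F) (M := Matrix (Fin k) (Fin k) F)
          ((0 : ℕ), L)) = ⊥
    · left
      rw [eq_bot_iff]
      intro x hx
      obtain ⟨u, rfl⟩ := hI hx
      have hu : u ∈ I.comap (Finsupp.lsingle (R := F) (M := Matrix (Fin k) (Fin k) F)
          ((0 : ℕ), L)) := hx
      rw [hbot, Submodule.mem_bot] at hu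
      simp [hu]
    · right
      have htop := aux_simple F k _ (fun a b hb => ?_) hbot
      · refine le_antisymm hI ?_
        rintro _ ⟨u, rfl⟩
        have hu : u ∈ (⊤ : Submodule F (Matrix (Fin k) (Fin k) F)) := trivial
        rw [← htop] at hu
        exact hu
      · have h1 := hid _ ⟨a, rfl⟩ _ hb
        rw [Finsupp.lsingle_apply, hP] at h1
        exact I.neg_mem_iff.1 h1
end

section
/- Let ℓ ≥ 2 be even and X = R*_{k×k,ℓ}, with minimal-weight subspace X^{(ℓ)} = X ∩ span{u(m₁,m₂) : u ∈ A, m₁+m₂+1 = ℓ} and product u ∘ v = u⁽ˡ⁻¹⁾v ((ℓ-1)-th product) on X^{(ℓ)}. Then X^{(ℓ)} = {w(0,ℓ-1) : w ∈ A, wᵀ = w}, for all symmetric w, w' ∈ A one has w(0,ℓ-1) ∘ w'(0,ℓ-1) = -(ww'+w'w)(0,ℓ-1), and the linear map w ↦ -w(0,ℓ-1) is an isomorphism from the Jordan algebra of symmetric k×k matrices (with product w∗w' = ww'+w'w) onto (X^{(ℓ)}, ∘); hence (X^{(ℓ)}, ∘) is a simple Jordan algebra of type B, independent of ℓ. -/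
/-- The subspace `R*_{k×k,ℓ} = span{binom(n+ℓ-1,ℓ-1)·u(m,n+ℓ-1)
- (-1)^{ℓ-1}·binom(m+ℓ-1,ℓ-1)·uᵀ(n,m+ℓ-1) : u ∈ A, m, n ∈ ℕ}` (`ℓ ≥ 1`). -/
noncomputable def RkklStar (F : Type*) [Field F] (k ℓ : ℕ) :
    Submodule F (MatCarrier F k) :=
  Submodule.span F {x | ∃ (u : Matrix (Fin k) (Fin k) F) (m n : ℕ),
    x = (((n + ℓ - 1).choose (ℓ - 1) : F)) • Finsupp.single (m, n + ℓ - 1) u -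
        ((-1 : F) ^ (ℓ - 1) * (((m + ℓ - 1).choose (ℓ - 1) : F))) •
          Finsupp.single (n, m + ℓ - 1) u.transpose}

/-- The elements `w(0,ℓ-1)` with `w` a symmetric matrix. -/
def symMinSet (F : Type*) [Field F] (k ℓ : ℕ) : Set (MatCarrier F k) :=
  {x | ∃ w : Matrix (Fin k) (Fin k) F, w.transpose = w ∧
    x = Finsupp.single ((0 : ℕ), ℓ - 1) w}

lemma aux_sum_sub_zero_mul (F : Type*) [Field F] (k ℓ : ℕ) (hℓ : 2 ≤ ℓ) (heven : Even ℓ)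
    (w w' : Matrix (Fin k) (Fin k) F) :
    mProd F k (ℓ - 1) (Finsupp.single ((0 : ℕ), ℓ - 1) w)
          (Finsupp.single ((0 : ℕ), ℓ - 1) w')
        = -(Finsupp.single ((0 : ℕ), ℓ - 1) (w * w' + w' * w)) := by
  have hodd : Odd (ℓ - 1) := Nat.Even.sub_odd (by omega) heven odd_one
  unfold mProd
  rw [Finsupp.sum_single_index, Finsupp.sum_single_index]
  · simp [hodd.neg_one_pow]
    abel
  · simp
  · simp

lemma aux_mem_min (F : Type*) [Field F] [CharZero F] (k ℓ : ℕ) (hℓ : 2 ≤ ℓ) (heven : Even ℓ) :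
    ((RkklStar F k ℓ ⊓ mWeight F k ℓ : Submodule F (MatCarrier F k)) : Set (MatCarrier F k))
      = symMinSet F k ℓ := by
  have hodd : Odd (ℓ - 1) := Nat.Even.sub_odd (by omega) heven odd_one
  ext x
  simp only [Submodule.coe_inf, Set.mem_inter_iff, SetLike.mem_coe]
  constructor
  · rintro ⟨h1, h2⟩
    have hw : ∀ p : ℕ × ℕ, p.1 + p.2 + 1 ≠ ℓ → x p = 0 := by
      refine Submodule.span_induction (p := fun x _ => ∀ p : ℕ × ℕ, p.1 + p.2 + 1 ≠ ℓ → x p = 0)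
        ?_ ?_ ?_ ?_ h2
      · rintro _ ⟨u, m₁, m₂, h, rfl⟩ p hp
        rw [Finsupp.single_apply, if_neg]
        rintro rfl
        exact hp h
      · simp
      · intro x y _ _ hx hy p hp
        simp [hx p hp, hy p hp]
      · intro a x _ hx p hp
        simp [hx p hp]
    have hs : (x (0, ℓ - 1)).transpose = x (0, ℓ - 1) ∧
        ∀ p : ℕ × ℕ, p.1 + p.2 + 1 = ℓ → p.1 ≠ 0 → x p = 0 := by
      refine Submodule.span_induction (p := fun x _ => (x (0, ℓ - 1)).transpose = x (0, ℓ - 1) ∧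
        ∀ p : ℕ × ℕ, p.1 + p.2 + 1 = ℓ → p.1 ≠ 0 → x p = 0) ?_ ?_ ?_ ?_ h1
      · rintro _ ⟨u, m, n, rfl⟩
        constructor
        · by_cases hmn : m = 0 ∧ n = 0
          · obtain ⟨rfl, rfl⟩ := hmn
            simp [hodd.neg_one_pow, add_comm]
          · have e1 : ¬ ((m, n + ℓ - 1) = (0, ℓ - 1)) := by
              rw [Prod.mk.injEq]; omega
            have e2 : ¬ ((n, m + ℓ - 1) = (0, ℓ - 1)) := by
              rw [Prod.mk.injEq]; omega
            simp only [Finsupp.sub_apply, Finsupp.smul_apply, Finsupp.single_apply, if_neg e1,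
              if_neg e2]
            simp
        · rintro ⟨a, b⟩ hp hp0
          simp only at hp hp0
          have e1 : ¬ ((m, n + ℓ - 1) = (a, b)) := by
            rw [Prod.mk.injEq]; omega
          have e2 : ¬ ((n, m + ℓ - 1) = (a, b)) := by
            rw [Prod.mk.injEq]; omega
          simp only [Finsupp.sub_apply, Finsupp.smul_apply, Finsupp.single_apply, if_neg e1,
              if_neg e2]
          simp
      · simp
      · rintro x y _ _ ⟨hx, hx'⟩ ⟨hy, hy'⟩
        refine ⟨by simp [hx, hy], fun p h h' => ?_⟩
        simp [hx' p h h', hy' p h h']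
      · rintro a x _ ⟨hx, hx'⟩
        refine ⟨by simp [hx], fun p h h' => ?_⟩
        simp [hx' p h h']
    refine ⟨x (0, ℓ - 1), hs.1, ?_⟩
    ext1 p
    rw [Finsupp.single_apply]
    split_ifs with h
    · rw [h]
    · by_cases hp : p.1 + p.2 + 1 = ℓ
      · refine hs.2 p hp fun h0 => h ?_
        ext <;> simp only <;> omega
      · exact hw p hp
  · rintro ⟨w, hw, rfl⟩
    constructor
    · have h : (Finsupp.single ((0 : ℕ), ℓ - 1) w : MatCarrier F k) = (2⁻¹ : F) •
          ((((0 + ℓ - 1).choose (ℓ - 1) : F)) • Finsupp.single (0, 0 + ℓ - 1) w -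
        ((-1 : F) ^ (ℓ - 1) * (((0 + ℓ - 1).choose (ℓ - 1) : F))) •
          Finsupp.single (0, 0 + ℓ - 1) w.transpose) := by
        rw [hw, hodd.neg_one_pow]
        simp only [zero_add, Nat.choose_self, Nat.cast_one, mul_one, neg_smul, one_smul,
          sub_neg_eq_add]
        rw [← two_smul F, smul_smul, inv_mul_cancel₀ two_ne_zero, one_smul]
      rw [h]
      exact Submodule.smul_mem _ _ (Submodule.subset_span ⟨w, 0, 0, rfl⟩)
    · exact Submodule.subset_span ⟨w, 0, ℓ - 1, by omega, rfl⟩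

lemma aux_smul_mem {F V : Type*} [Field F] [AddCommGroup V] [Module F V] (J : Submodule F V)
    {c : F} (hc : c ≠ 0) {x : V} (h : c • x ∈ J) : x ∈ J := (J.smul_mem_iff hc).1 h

open Matrix in
lemma aux_one_mem {F : Type*} [Field F] [CharZero F] {k : ℕ}
    (J : Submodule F (Matrix (Fin k) (Fin k) F))
    (hJ : ∀ a : Matrix (Fin k) (Fin k) F, a.transpose = a → ∀ b ∈ J, a * b + b * a ∈ J)
    (w : Matrix (Fin k) (Fin k) F) (hw : w.transpose = w) (hwJ : w ∈ J) (hw0 : w ≠ 0) :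
    (1 : Matrix (Fin k) (Fin k) F) ∈ J := by
  have hE : ∀ i : Fin k, (single i i (1 : F)).transpose = single i i 1 := by
    intro i; simp
  have hS : ∀ i j : Fin k, (single i j (1 : F) + single j i 1).transpose
      = single i j (1 : F) + single j i 1 := by
    intro i j; simp [add_comm]
  have sq : ∀ i j : Fin k, i ≠ j → single i j (1 : F) + single j i 1 ∈ J →
      single i i (1 : F) + single j j 1 ∈ J := by
    intro i j hij h
    have := hJ _ (hS i j) _ h
    refine aux_smul_mem J (two_ne_zero (α := F)) ?_
    convert this using 1
    simp [add_mul, mul_add, hij, hij.symm, two_smul]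
    abel
  have key : ∃ i : Fin k, single i i (1 : F) ∈ J := by
    by_cases hd : ∃ i, w i i ≠ 0
    · obtain ⟨i, hi⟩ := hd
      refine ⟨i, ?_⟩
      have h1 := hJ _ (hE i) _ hwJ
      have h2 := J.sub_mem (hJ _ (hE i) _ h1) h1
      have e : single i i (1 : F) * (single i i 1 * w + w * single i i 1)
          + (single i i 1 * w + w * single i i 1) * single i i 1
          - (single i i 1 * w + w * single i i 1)
          = (2 * w i i) • single i i (1 : F) := by
        have h3 : single i i (1 : F) * w * single i i 1 = w i i • single i i (1 : F) := by
          simp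
        have h4 : single i i (1 : F) * single i i 1 = single i i 1 := by simp
        rw [mul_smul, ← h3, two_smul]
        simp only [mul_add, add_mul, mul_assoc, h4]
        simp only [← mul_assoc, h4]
        abel
      rw [e] at h2
      exact aux_smul_mem J (mul_ne_zero two_ne_zero hi) h2
    · push Not at hd
      obtain ⟨i, j, hij⟩ : ∃ i j, w i j ≠ 0 := by
        by_contra! h
        exact hw0 (Matrix.ext h)
      have hne : i ≠ j := by
        rintro rfl
        exact hij (hd i)
      refine ⟨i, ?_⟩
      have h2 := hJ _ (hE j) _ (hJ _ (hE i) _ hwJ)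
      have hji : w j i = w i j := by
        conv_rhs => rw [← hw]
        rfl
      have e : single j j (1 : F) * (single i i 1 * w + w * single i i 1)
          + (single i i 1 * w + w * single i i 1) * single j j 1
          = w i j • (single i j (1 : F) + single j i 1) := by
        simp only [mul_add, add_mul]
        have h5 : w * single i i (1:F) * single j j 1 = 0 := by
          rw [mul_assoc]; simp [hne]
        have h6 : single j j (1:F) * (single i i 1 * w) = 0 := by
          rw [← mul_assoc]; simp [hne.symm]
        rw [h5, h6, ← mul_assoc]
        simp [hji, add_comm]
      rw [e] at h2
      have h3 := sq i j hne (aux_smul_mem J hij h2)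
      have h4 := hJ _ (hE i) _ h3
      refine aux_smul_mem J (two_ne_zero (α := F)) ?_
      convert h4 using 1
      simp [add_mul, mul_add, hne, hne.symm, two_smul]
  obtain ⟨i, hi⟩ := key
  have all : ∀ j, single j j (1 : F) ∈ J := by
    intro j
    by_cases hij : i = j
    · exact hij ▸ hi
    have h1 := hJ _ (hS i j) _ hi
    have e : (single i j (1 : F) + single j i 1) * single i i 1
        + single i i 1 * (single i j (1 : F) + single j i 1)
        = single i j (1 : F) + single j i 1 := by
      have := Ne.symm hij
      simp [add_mul, mul_add, hij, this, add_comm]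
    rw [e] at h1
    have h2 := J.sub_mem (sq i j hij h1) hi
    simpa using h2
  have : (1 : Matrix (Fin k) (Fin k) F) = ∑ j, single j j (1 : F) := by
    rw [Matrix.sum_single_eq_diagonal]
    simp
  rw [this]
  exact J.sum_mem fun j _ => all j

/-- **Theorem 4.3, type B**: let `ℓ ≥ 2` be even and `X = R*_{k×k,ℓ}`, with
minimal-weight subspace `X^{(ℓ)} = X ∩ R_{k×k}^{(ℓ)}` and product
`x ∘ y = x⁽ˡ⁻¹⁾y`.  Then `X^{(ℓ)} = {w(0,ℓ-1) : wᵀ = w}`, on it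
`w(0,ℓ-1) ∘ w'(0,ℓ-1) = -(ww'+w'w)(0,ℓ-1)`, the map `w ↦ -w(0,ℓ-1)` is an
isomorphism from the Jordan algebra of symmetric `k×k` matrices onto
`(X^{(ℓ)}, ∘)`, and `(X^{(ℓ)}, ∘)` is a simple Jordan algebra (of type B,
independent of `ℓ`). -/
theorem RkklStar_minimal_weight_jordan_typeB (F : Type*) [Field F] [CharZero F]
    (k ℓ : ℕ) (hk : 1 ≤ k) (hℓ : 2 ≤ ℓ) (heven : Even ℓ) :
    -- identification of the minimal-weight subspace
    ((RkklStar F k ℓ ⊓ mWeight F k ℓ : Submodule F (MatCarrier F k)) : Set (MatCarrier F k))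
      = symMinSet F k ℓ ∧
    -- the product formula
    (∀ w w' : Matrix (Fin k) (Fin k) F, w.transpose = w → w'.transpose = w' →
      mProd F k (ℓ - 1) (Finsupp.single ((0 : ℕ), ℓ - 1) w)
          (Finsupp.single ((0 : ℕ), ℓ - 1) w')
        = -(Finsupp.single ((0 : ℕ), ℓ - 1) (w * w' + w' * w))) ∧
    -- w ↦ -w(0,ℓ-1) is an isomorphism from symmetric matrices onto (X^{(ℓ)}, ∘)
    (Set.InjOn (fun w : Matrix (Fin k) (Fin k) F =>
        -(Finsupp.single ((0 : ℕ), ℓ - 1) w : MatCarrier F k))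
      {w | w.transpose = w}) ∧
    ((fun w : Matrix (Fin k) (Fin k) F =>
        -(Finsupp.single ((0 : ℕ), ℓ - 1) w : MatCarrier F k)) ''
      {w | w.transpose = w} = symMinSet F k ℓ) ∧
    (∀ w w' : Matrix (Fin k) (Fin k) F, w.transpose = w → w'.transpose = w' →
      -(Finsupp.single ((0 : ℕ), ℓ - 1) (w * w' + w' * w) : MatCarrier F k)
        = mProd F k (ℓ - 1) (-(Finsupp.single ((0 : ℕ), ℓ - 1) w))
            (-(Finsupp.single ((0 : ℕ), ℓ - 1) w'))) ∧
    -- (X^{(ℓ)}, ∘) is a simple Jordan algebra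
    (∀ x ∈ symMinSet F k ℓ, ∀ y ∈ symMinSet F k ℓ,
      mProd F k (ℓ - 1) x y ∈ symMinSet F k ℓ ∧
      mProd F k (ℓ - 1) x y = mProd F k (ℓ - 1) y x ∧
      mProd F k (ℓ - 1) (mProd F k (ℓ - 1) (mProd F k (ℓ - 1) x x) y) x
        = mProd F k (ℓ - 1) (mProd F k (ℓ - 1) x x) (mProd F k (ℓ - 1) y x)) ∧
    (∃ x ∈ symMinSet F k ℓ, ∃ y ∈ symMinSet F k ℓ, mProd F k (ℓ - 1) x y ≠ 0) ∧
    (∀ I : Submodule F (MatCarrier F k),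
      I ≤ Submodule.span F (symMinSet F k ℓ) →
      (∀ a ∈ symMinSet F k ℓ, ∀ b ∈ I, mProd F k (ℓ - 1) a b ∈ I) →
      I = ⊥ ∨ I = Submodule.span F (symMinSet F k ℓ)) := by
  have hP := aux_sum_sub_zero_mul F k ℓ hℓ heven
  have hM := aux_mem_min F k ℓ hℓ heven
  have hspan : Submodule.span F (symMinSet F k ℓ) = RkklStar F k ℓ ⊓ mWeight F k ℓ := by
    rw [← hM, Submodule.span_eq]
  have hmem : ∀ x, x ∈ Submodule.span F (symMinSet F k ℓ) ↔ x ∈ symMinSet F k ℓ := by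
    intro x
    rw [hspan, ← hM]; rfl
  refine ⟨hM, fun w w' _ _ => hP w w', ?_, ?_, ?_, ?_, ?_, ?_⟩
  · intro a _ b _ h
    exact Finsupp.single_injective _ (neg_injective h)
  · ext x
    constructor
    · rintro ⟨w, hw, rfl⟩
      refine ⟨-w, ?_, ?_⟩
      · rw [Matrix.transpose_neg, hw]
      · simp
    · rintro ⟨w, hw, rfl⟩
      refine ⟨-w, ?_, ?_⟩
      · show (-w).transpose = -w
        rw [Matrix.transpose_neg, hw]
      · simp
  · intro w w' _ _
    rw [← Finsupp.single_neg, ← Finsupp.single_neg, ← Finsupp.single_neg, hP,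
      ← Finsupp.single_neg]
    congr 1
    noncomm_ring
  · rintro _ ⟨w, hw, rfl⟩ _ ⟨v, hv, rfl⟩
    simp only [hP, ← Finsupp.single_neg]
    refine ⟨⟨_, ?_, rfl⟩, ?_, ?_⟩
    · simp [hw, hv, add_comm]
    · congr 2
      rw [add_comm]
    · congr 1
      noncomm_ring
  · refine ⟨_, ⟨1, Matrix.transpose_one, rfl⟩, _, ⟨1, Matrix.transpose_one, rfl⟩, ?_⟩
    rw [hP]
    intro h
    rw [neg_eq_zero, Finsupp.single_eq_zero] at h
    have h' := congrFun (congrFun h ⟨0, hk⟩) ⟨0, hk⟩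
    simp at h'
  · intro I hI hid
    by_cases hbot : I = ⊥
    · exact Or.inl hbot
    right
    refine le_antisymm hI ?_
    obtain ⟨b, hb, hb0⟩ := Submodule.exists_mem_ne_zero_of_ne_bot hbot
    obtain ⟨w, hw, rfl⟩ := (hmem b).1 (hI hb)
    have hJ : ∀ a : Matrix (Fin k) (Fin k) F, a.transpose = a →
        ∀ b ∈ I.comap (Finsupp.lsingle (R := F) ((0 : ℕ), ℓ - 1)), a * b + b * a ∈
          I.comap (Finsupp.lsingle (R := F) ((0 : ℕ), ℓ - 1)) := by
      intro a ha b hb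
      have := hid _ ⟨a, ha, rfl⟩ _ hb
      rw [Finsupp.lsingle_apply, hP, neg_mem_iff] at this
      exact this
    have h1 := aux_one_mem _ hJ w hw hb (by rintro rfl; simp at hb0)
    rw [Submodule.span_le]
    rintro _ ⟨v, hv, rfl⟩
    have h2 := hJ v hv _ h1
    rw [mul_one, one_mul, ← two_smul F] at h2
    have h3 := aux_smul_mem _ (two_ne_zero (α := F)) h2
    exact h3
end
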